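/- arXiv:2604.23965 — 2 statements merged into one kernel-verified Lean document; each statement's English description precedes it below -/
import Mathlib

section
/- Fix a positive integer n, let C₁ > 1 and f₁ : P(3) → P(3) be as constructed from the flow of the cut-off vector field (so that f₁(G) = G'), and set N_n(G') = f₁(P(1/(100C₁n))) and, for integers i, j ∈ [−n, n], let N_n(G'_{i,j}) be the horizontal translate of N_n(G') by (i/n, j/n, 0). Then there exists a constant C₂ > 1 independent of n such that for any integers i, j ∈ [−n, n] there exists a smooth C₂-bi-Lipschitz homeomorphism f_{2,i,j} : P(3) → P(3) that restricts to the identity on ∂_ver P(3), maps G' onto G'_{i,j}, and maps N_n(G') onto N_n(G'_{i,j}) (its restriction to N_n(G') being the horizontal translation by (i/n, j/n, 0)). -/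
noncomputable section

open Set Metric

/-- Euclidean 3-space. -/
abbrev R3 : Type := EuclideanSpace ℝ (Fin 3)

/-- The point `(a, b, c)` of `ℝ³`. -/
noncomputable def mk3 (a b c : ℝ) : R3 := (WithLp.equiv 2 (Fin 3 → ℝ)).symm ![a, b, c]

/-- The `Y`-shaped solid `P(r) ⊂ ℝ³`. -/
def Pset (r : ℝ) : Set R3 :=
  {p | ((p 0) ^ 2 + (p 1) ^ 2 ≤ r ^ 2 ∧ 0 ≤ p 2 ∧ p 2 ≤ 8) ∨
       ((p 0) ^ 2 + (p 1 + p 2) ^ 2 ≤ r ^ 2 ∧ -8 ≤ p 2 ∧ p 2 ≤ 0) ∨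
       ((p 0) ^ 2 + (p 1 - p 2) ^ 2 ≤ r ^ 2 ∧ -8 ≤ p 2 ∧ p 2 ≤ 0)}

/-- The closed horizontal `r`-neighborhood `N^hor_r(S)` of a subset `S ⊂ ℝ³`. -/
def Nhor (r : ℝ) (S : Set R3) : Set R3 :=
  {p | ∃ q ∈ S, q 2 = p 2 ∧ (p 0 - q 0) ^ 2 + (p 1 - q 1) ^ 2 ≤ r ^ 2}

/-- The `Y`-shaped graph `G = ⋂_{r>0} P(r)`. -/
def Ggraph : Set R3 :=
  {p | (p 0 = 0 ∧ p 1 = 0 ∧ 0 ≤ p 2 ∧ p 2 ≤ 8) ∨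
       (∃ ε : ℝ, (ε = 1 ∨ ε = -1) ∧
         p 0 = 0 ∧ p 1 = ε * p 2 ∧ -8 ≤ p 2 ∧ p 2 ≤ 0)}

/-- The perturbed `Y`-shaped graph `G' ⊂ P(3)` (depending on the positive integer `n`). -/
def Ggraph' (n : ℕ) : Set R3 :=
  {p | (p 0 = 0 ∧ p 1 = 0 ∧ 0 ≤ p 2 ∧ p 2 ≤ 8) ∨
       (∃ ε : ℝ, (ε = 1 ∨ ε = -1) ∧
         p 0 = ε * p 2 ∧ p 1 = 0 ∧ -(1 / (10 * (n : ℝ))) ≤ p 2 ∧ p 2 ≤ 0) ∨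
       (∃ ε : ℝ, (ε = 1 ∨ ε = -1) ∧
         p 0 = -ε / (10 * (n : ℝ)) ∧ p 1 = ε * (p 2 + 1 / (10 * (n : ℝ))) ∧
         -8 ≤ p 2 ∧ p 2 ≤ -(1 / (10 * (n : ℝ))))}

/-- Horizontal translation of a subset of `ℝ³` by the vector `(a, b, 0)`. -/
def translateH (a b : ℝ) (S : Set R3) : Set R3 :=
  {p | ∃ q ∈ S, p 0 = q 0 + a ∧ p 1 = q 1 + b ∧ p 2 = q 2}

/-- The translate `G'_{i,j}` of `G'` by the horizontal vector `(i/n, j/n, 0)`. -/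
def Gij (n : ℕ) (i j : ℤ) : Set R3 :=
  translateH ((i : ℝ) / (n : ℝ)) ((j : ℝ) / (n : ℝ)) (Ggraph' n)

/-- (The interior of) the horizontal boundary disk `D₁` of `P(3)`. -/
def D1int : Set R3 := {p | p 2 = 8 ∧ (p 0) ^ 2 + (p 1) ^ 2 < 9}

/-- (The interior of) the horizontal boundary disk `D₂` of `P(3)`. -/
def D2int : Set R3 := {p | p 2 = -8 ∧ (p 0) ^ 2 + (p 1 - 8) ^ 2 < 9}

/-- (The interior of) the horizontal boundary disk `D₃` of `P(3)`. -/
def D3int : Set R3 := {p | p 2 = -8 ∧ (p 0) ^ 2 + (p 1 + 8) ^ 2 < 9}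

/-- The vertical boundary `∂_ver P(3)`: the boundary of `P(3)` minus the interiors of the
three horizontal disks `D₁, D₂, D₃`. -/
def verBoundary : Set R3 := frontier (Pset 3) \ (D1int ∪ D2int ∪ D3int)

end

noncomputable section

/-!
Fix `r + s < R`, and let `χ` be a smooth cut-off which is `1` on the compact set `P(r + s)` and
vanishes on and outside the vertical boundary of `P(R)`. For `w` horizontal of norm at most `s`, the
time-one flow of `χ • w` preserves heights, so it maps `P(R)` onto itself, and it moves points of
`P(r)` exactly by `w`, since they stay in `P(r + s)` on the way. The flow is replaced here by `k`
steps of the Euler scheme `p ↦ p + χ p • (w / k)`. If `k` is large in terms of `s` and the Lipschitz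
constant of `χ` alone, each step is a `1/2`-Lipschitz perturbation of the identity, hence bijective
and `2`-bi-Lipschitz, so the composite is `2 ^ k`-bi-Lipschitz uniformly in `w`. All the sets
`N_n(G')` lie in `P(1)`, and the translations needed have norm at most `√2 < 3 - 1`.
-/

open Set Function
open scoped ContDiff NNReal

theorem mapsTo_of_injective_of_fixed_compl {α : Type*} {f : α → α} {U : Set α} (hf : Injective f)
    (hfix : ∀ p ∉ U, f p = p) : MapsTo f U U := fun p hp => by
  by_contra hfp
  exact hfp (by rwa [hf (hfix _ hfp)])

theorem abs_intCast_div_le_one {n : ℕ} {i : ℤ} (hi : |i| ≤ n) : |(i : ℝ) / n| ≤ 1 := by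
  rw [abs_div, Nat.abs_cast]
  exact div_le_one_of_le₀ (by exact_mod_cast hi) n.cast_nonneg

theorem sq_abs_add_eq_min {y z : ℝ} (hz : z ≤ 0) :
    (|y| + z) ^ 2 = min ((y + z) ^ 2) ((y - z) ^ 2) := by
  rcases abs_cases y with ⟨hy, hy'⟩ | ⟨hy, hy'⟩ <;> rw [hy]
  · exact (min_eq_left (by nlinarith)).symm
  · rw [min_eq_right (by nlinarith)]; ring

theorem contDiff_iterate {𝕜 E : Type*} [NontriviallyNormedField 𝕜] [NormedAddCommGroup E]
    [NormedSpace 𝕜 E] {m : WithTop ℕ∞} {f : E → E} (hf : ContDiff 𝕜 m f) :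
    ∀ k : ℕ, ContDiff 𝕜 m f^[k]
  | 0 => contDiff_id
  | k + 1 => (contDiff_iterate hf k).comp hf

theorem antilipschitzWith_iterate {α : Type*} [PseudoEMetricSpace α] {K : ℝ≥0} {f : α → α}
    (hf : AntilipschitzWith K f) : ∀ k : ℕ, AntilipschitzWith (K ^ k) f^[k]
  | 0 => by rw [pow_zero, iterate_zero]; exact AntilipschitzWith.id
  | k + 1 => by rw [pow_succ']; exact (antilipschitzWith_iterate hf k).comp hf

theorem exists_contDiff_hasCompactSupport_eqOn_one {E : Type*} [NormedAddCommGroup E]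
    [NormedSpace ℝ E] [FiniteDimensional ℝ E] {K U : Set E} (hK : IsCompact K)
    (hU : IsOpen U) (hKU : K ⊆ U) :
    ∃ χ : E → ℝ, ContDiff ℝ ∞ χ ∧ HasCompactSupport χ ∧ EqOn χ 1 K ∧ EqOn χ 0 Uᶜ := by
  obtain ⟨M, hM, hKM, hMU⟩ := exists_compact_between hK hU hKU
  obtain ⟨χ, h_one, h_zero, -⟩ := exists_contMDiffMap_one_nhds_of_subset_interior (n := ⊤)
    (modelWithCornersSelf ℝ E) hK.isClosed hKM
  exact ⟨χ, χ.contMDiff.contDiff, HasCompactSupport.intro hM h_zero,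
    fun x hx => h_one.self_of_nhdsSet x hx, fun x hx => h_zero x fun hxM => hx (hMU hxM)⟩

section EulerStep

variable {E : Type*} [NormedAddCommGroup E] [NormedSpace ℝ E]

/-- The explicit Euler step `p ↦ p + χ p • w` for the cut-off constant vector field `χ • w`.
Its iterates replace the flow of `χ • w`. -/
def eulerStep (χ : E → ℝ) (w p : E) : E := p + χ p • w

variable {χ : E → ℝ} {w p : E} {L κ : ℝ≥0}

theorem eulerStep_of_eq_zero (h : χ p = 0) : eulerStep χ w p = p := by
  rw [eulerStep, h, zero_smul, add_zero]

theorem eulerStep_of_eq_one (h : χ p = 1) : eulerStep χ w p = p + w := by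
  rw [eulerStep, h, one_smul]

theorem contDiff_eulerStep {m : WithTop ℕ∞} (hχ : ContDiff ℝ m χ) :
    ContDiff ℝ m (eulerStep χ w) :=
  contDiff_id.add (hχ.smul contDiff_const)

theorem lipschitzWith_smul_const (hχ : LipschitzWith L χ) (w : E) :
    LipschitzWith (‖w‖₊ * L) fun p => χ p • w := by
  rw [← ContinuousLinearMap.nnnorm_toSpanSingleton (𝕜 := ℝ) w]
  exact (ContinuousLinearMap.toSpanSingleton ℝ w).lipschitz.comp hχ

theorem exists_nat_lipschitzWith_smul_inv_smul (hχ : LipschitzWith L χ) (hκ : 0 < κ)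
    (s : ℝ≥0) :
    ∃ k : ℕ, 0 < k ∧ ∀ w : E, ‖w‖₊ ≤ s → LipschitzWith κ fun p => χ p • ((k : ℝ)⁻¹ • w) := by
  obtain ⟨k, hk⟩ := exists_nat_gt (s * L / κ)
  have hk_pos : 0 < (k : ℝ≥0) := pos_of_gt hk
  refine ⟨k, Nat.cast_pos.1 hk_pos, fun w hw => (lipschitzWith_smul_const hχ _).weaken ?_⟩
  calc ‖(k : ℝ)⁻¹ • w‖₊ * L = (k : ℝ≥0)⁻¹ * (‖w‖₊ * L) := by
        rw [nnnorm_smul, nnnorm_inv, Real.nnnorm_natCast, mul_assoc]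
    _ ≤ (k : ℝ≥0)⁻¹ * (s * L) := by gcongr
    _ ≤ κ := by rw [inv_mul_le_iff₀ hk_pos]; exact ((div_lt_iff₀ hκ).1 hk).le

theorem lipschitzWith_eulerStep (h : LipschitzWith κ fun p => χ p • w) :
    LipschitzWith (1 + κ) (eulerStep χ w) :=
  LipschitzWith.id.add h

theorem antilipschitzWith_eulerStep (h : LipschitzWith κ fun p => χ p • w) (hκ : κ < 1) :
    AntilipschitzWith (1 - κ)⁻¹ (eulerStep χ w) := by
  rw [← inv_one] at hκ
  have := AntilipschitzWith.id.add_lipschitzWith h hκ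
  rwa [inv_one] at this

theorem surjective_eulerStep [CompleteSpace E] (h : LipschitzWith κ fun p => χ p • w)
    (hκ : κ < 1) : Surjective (eulerStep χ w) := by
  intro y
  have hcontr : ContractingWith κ fun x => y - χ x • w :=
    ⟨hκ, by simpa only [zero_add] using (LipschitzWith.const y).sub h⟩
  exact ⟨_, eq_sub_iff_add_eq.1 hcontr.fixedPoint_isFixedPt.symm⟩

theorem bijective_eulerStep [CompleteSpace E] (h : LipschitzWith κ fun p => χ p • w)
    (hκ : κ < 1) : Bijective (eulerStep χ w) :=
  ⟨(antilipschitzWith_eulerStep h hκ).injective, surjective_eulerStep h hκ⟩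

theorem eulerStep_iterate_sub_mem_span (χ : E → ℝ) (w p : E) (k : ℕ) :
    (eulerStep χ w)^[k] p - p ∈ Submodule.span ℝ {w} := by
  induction k with
  | zero => simp
  | succ k ih =>
    rw [iterate_succ_apply', eulerStep, add_sub_right_comm]
    exact add_mem ih (Submodule.smul_mem _ _ (Submodule.mem_span_singleton_self w))

theorem eulerStep_iterate_eq_add {k : ℕ} (h : ∀ m < k, χ (p + m • w) = 1) :
    (eulerStep χ w)^[k] p = p + k • w := by
  induction k with
  | zero => simp
  | succ k ih =>
    rw [iterate_succ_apply', ih fun m hm => h m (hm.trans k.lt_succ_self),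
      eulerStep_of_eq_one (h k k.lt_succ_self), succ_nsmul, add_assoc]

theorem add_nsmul_inv_smul_mem_segment (p w : E) {m k : ℕ} (h : m ≤ k) :
    p + m • ((k : ℝ)⁻¹ • w) ∈ segment ℝ p (p + w) := by
  rw [segment_eq_image']
  refine ⟨m / k, ⟨by positivity, div_le_one_of_le₀ (by exact_mod_cast h) k.cast_nonneg⟩, ?_⟩
  rw [add_sub_cancel_left, ← Nat.cast_smul_eq_nsmul ℝ, smul_smul, div_eq_mul_inv]

theorem exists_contDiff_biLipschitz_eq_add [FiniteDimensional ℝ E] {K U : Set E}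
    (hK : IsCompact K) (hU : IsOpen U) (hKU : K ⊆ U) (s : ℝ≥0) :
    ∃ C : ℝ≥0, 1 < C ∧ ∀ w : E, ‖w‖₊ ≤ s → ∃ f : E → E, ContDiff ℝ ∞ f ∧ Bijective f ∧
      LipschitzWith C f ∧ AntilipschitzWith C f ∧ (∀ p ∉ U, f p = p) ∧
      (∀ p, f p - p ∈ Submodule.span ℝ {w}) ∧
      ∀ p, segment ℝ p (p + w) ⊆ K → f p = p + w := by
  have : CompleteSpace E := FiniteDimensional.complete ℝ E
  obtain ⟨χ, hsmooth, hsupp, h_one, h_zero⟩ :=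
    exists_contDiff_hasCompactSupport_eqOn_one hK hU hKU
  obtain ⟨L, hL⟩ := hsmooth.lipschitzWith_of_hasCompactSupport hsupp (by simp)
  obtain ⟨k, hk, hstep⟩ := exists_nat_lipschitzWith_smul_inv_smul hL (κ := 2⁻¹) (by norm_num) s
  refine ⟨2 ^ k, one_lt_pow₀ one_lt_two hk.ne', fun w hw => ?_⟩
  set v : E := (k : ℝ)⁻¹ • w
  have hlip : LipschitzWith 2 (eulerStep χ v) :=
    (lipschitzWith_eulerStep (hstep w hw)).weaken
      ((add_le_add_right two_inv_lt_one.le 1).trans_eq one_add_one_eq_two)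
  have hanti : AntilipschitzWith 2 (eulerStep χ v) := by
    have := antilipschitzWith_eulerStep (hstep w hw) two_inv_lt_one
    rwa [show (1 - 2⁻¹ : ℝ≥0) = 2⁻¹ from tsub_eq_of_eq_add (by norm_num), inv_inv] at this
  refine ⟨(eulerStep χ v)^[k], contDiff_iterate (contDiff_eulerStep hsmooth) k,
    (bijective_eulerStep (hstep w hw) two_inv_lt_one).iterate k, hlip.iterate k,
    antilipschitzWith_iterate hanti k,
    fun p hp => iterate_fixed (eulerStep_of_eq_zero (h_zero hp)) k, fun p => ?_, fun p hp => ?_⟩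
  · exact Submodule.span_singleton_smul_le ℝ _ w (eulerStep_iterate_sub_mem_span χ v p k)
  · rw [eulerStep_iterate_eq_add fun m hm =>
      h_one (hp (add_nsmul_inv_smul_mem_segment p w hm.le)), ← Nat.cast_smul_eq_nsmul ℝ,
      smul_inv_smul₀ (Nat.cast_ne_zero.2 hk.ne')]

end EulerStep

/-- Horizontal position relative to the `Y`-shaped graph `Ggraph`, prolonged to all heights: the
fold `y ↦ |y|` identifies the two legs and adding `min z 0` straightens them, so `‖foldY p‖` is the
distance from `p` to that graph within the horizontal plane through `p`. -/
def foldY (p : R3) : EuclideanSpace ℝ (Fin 2) := !₂[p 0, |p 1| + min (p 2) 0]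

theorem continuous_foldY : Continuous foldY := by
  unfold foldY; fun_prop

theorem norm_foldY_sq (p : R3) : ‖foldY p‖ ^ 2 = p 0 ^ 2 + (|p 1| + min (p 2) 0) ^ 2 := by
  simp [foldY, EuclideanSpace.real_norm_sq_eq]

theorem dist_foldY_le_dist {p q : R3} (h : p 2 = q 2) : dist (foldY p) (foldY q) ≤ dist p q := by
  have hy : |(|p 1| + min (q 2) 0) - (|q 1| + min (q 2) 0)| ≤ |p 1 - q 1| := by
    rw [add_sub_add_right_eq_sub]
    exact abs_abs_sub_abs_le_abs_sub _ _
  simp only [EuclideanSpace.dist_eq, Fin.sum_univ_two, Fin.sum_univ_three, foldY, h, Real.dist_eq,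
    Matrix.cons_val_zero, Matrix.cons_val_one, sub_self, abs_zero, zero_pow two_ne_zero, add_zero]
  gcongr

theorem norm_foldY_add_le (p : R3) {w : R3} (hw : w 2 = 0) :
    ‖foldY (p + w)‖ ≤ ‖foldY p‖ + ‖w‖ := by
  have := dist_foldY_le_dist (p := p + w) (q := p) (by simp [hw])
  rw [dist_self_add_left, dist_eq_norm] at this
  linarith [norm_le_norm_add_norm_sub' (foldY (p + w)) (foldY p)]

theorem mem_Pset_iff {r : ℝ} (hr : 0 ≤ r) {p : R3} : p ∈ Pset r ↔ ‖foldY p‖ ≤ r ∧ |p 2| ≤ 8 := by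
  rw [← sq_le_sq₀ (norm_nonneg _) hr, norm_foldY_sq, abs_le]
  simp only [Pset, mem_ofPred_eq]
  rcases lt_trichotomy (p 2) 0 with hz | hz | hz
  · rw [min_eq_left hz.le, sq_abs_add_eq_min hz.le, ← min_add_add_left, min_le_iff]
    grind
  · simp [hz]
  · rw [min_eq_right hz.le, add_zero, sq_abs]
    grind

theorem add_mem_Pset {r : ℝ} (hr : 0 ≤ r) {p w : R3} (hp : p ∈ Pset r) (hw : w 2 = 0) :
    p + w ∈ Pset (r + ‖w‖) := by
  obtain ⟨hfold, hheight⟩ := (mem_Pset_iff hr).1 hp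
  refine (mem_Pset_iff (by positivity)).2
    ⟨(norm_foldY_add_le p hw).trans (by gcongr), by simpa [hw] using hheight⟩

theorem Pset_mono {r R : ℝ} (hr : 0 ≤ r) (h : r ≤ R) : Pset r ⊆ Pset R := fun _ hp =>
  (mem_Pset_iff (hr.trans h)).2 (((mem_Pset_iff hr).1 hp).imp_left h.trans')

theorem isClosed_Pset {r : ℝ} (hr : 0 ≤ r) : IsClosed (Pset r) := by
  have : Pset r = {p | ‖foldY p‖ ≤ r} ∩ {p : R3 | |p 2| ≤ 8} := ext fun _ => mem_Pset_iff hr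
  rw [this]
  exact (isClosed_le continuous_foldY.norm continuous_const).inter
    (isClosed_le (by fun_prop) continuous_const)

theorem isCompact_Pset {r : ℝ} (hr : 0 ≤ r) : IsCompact (Pset r) := by
  have hbox := (isCompact_Icc (a := fun _ => -(r + 8)) (b := fun _ => r + 8)).image
    (PiLp.continuous_toLp 2 fun _ : Fin 3 => ℝ)
  refine hbox.of_isClosed_subset (isClosed_Pset hr) fun p hp => ?_
  obtain ⟨hfold, hheight⟩ := (mem_Pset_iff hr).1 hp
  have hx : |p 0| ≤ r := (PiLp.norm_apply_le (foldY p) 0).trans hfold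
  have hy : |(|p 1| + min (p 2) 0)| ≤ r := (PiLp.norm_apply_le (foldY p) 1).trans hfold
  have hz : -8 ≤ min (p 2) 0 := le_min (abs_le.1 hheight).1 (by norm_num)
  have hcoord (i : Fin 3) : |p i| ≤ r + 8 := by
    fin_cases i
    · exact hx.trans (by linarith)
    · have := (abs_le.1 hy).2
      exact (by linarith : |p 1| ≤ r + 8)
    · exact hheight.trans (by linarith)
  exact ⟨p.ofLp, ⟨fun i => (abs_le.1 (hcoord i)).1, fun i => (abs_le.1 (hcoord i)).2⟩, rfl⟩

theorem mem_interior_Pset {r : ℝ} {p : R3} (hfold : ‖foldY p‖ < r) (hheight : |p 2| < 8) :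
    p ∈ interior (Pset r) := by
  refine mem_interior.2 ⟨{q | ‖foldY q‖ < r} ∩ {q | |q 2| < 8}, ?_, ?_, hfold, hheight⟩
  · exact fun q hq => (mem_Pset_iff ((norm_nonneg _).trans hfold.le)).2 ⟨hq.1.le, hq.2.le⟩
  · exact (isOpen_lt continuous_foldY.norm continuous_const).inter
      (isOpen_lt (by fun_prop) continuous_const)

theorem mem_horizontal_disks {p : R3} (hfold : ‖foldY p‖ < 3) (hheight : |p 2| = 8) :
    p ∈ D1int ∪ D2int ∪ D3int := by
  rw [← sq_lt_sq₀ (norm_nonneg _) (by norm_num), norm_foldY_sq] at hfold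
  rcases (abs_eq (by norm_num)).1 hheight with hz | hz
  · rw [hz, min_eq_right (by norm_num), add_zero, sq_abs] at hfold
    exact Or.inl (Or.inl ⟨hz, by linarith⟩)
  · rw [hz, min_eq_left (by norm_num), sq_abs_add_eq_min (by norm_num), ← min_add_add_left,
      min_lt_iff] at hfold
    rcases hfold with h | h
    · exact Or.inl (Or.inr ⟨hz, by linarith⟩)
    · exact Or.inr ⟨hz, by linarith⟩

theorem le_norm_foldY_of_mem_verBoundary {p : R3} (hp : p ∈ verBoundary) : 3 ≤ ‖foldY p‖ := by
  by_contra! hfold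
  obtain ⟨hfrontier, hdisks⟩ := hp
  have hheight : |p 2| ≤ 8 :=
    ((mem_Pset_iff (by norm_num)).1 ((isClosed_Pset (by norm_num)).frontier_subset hfrontier)).2
  rcases hheight.lt_or_eq with hlt | heq
  · exact hfrontier.2 (mem_interior_Pset hfold hlt)
  · exact hdisks (mem_horizontal_disks hfold heq)

theorem Ggraph'_subset_Pset (n : ℕ) : Ggraph' n ⊆ Pset (1 / (5 * n)) := by
  intro p hp
  have hd : 0 ≤ 1 / (10 * (n : ℝ)) := by positivity
  have hd_le : 1 / (10 * (n : ℝ)) ≤ 8 := by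
    rw [one_div, mul_inv]
    linarith [Nat.cast_inv_le_one (α := ℝ) n]
  have hr : 1 / (5 * (n : ℝ)) = 2 * (1 / (10 * n)) := by ring
  have he : ∀ ε : ℝ, -ε / (10 * n) = -ε * (1 / (10 * n)) := fun ε => div_eq_mul_one_div _ _
  simp only [Ggraph', mem_ofPred_eq, he] at hp
  simp only [Pset, hr, mem_ofPred_eq]
  generalize 1 / (10 * (n : ℝ)) = d at *
  rcases hp with ⟨hx, hy, hz⟩ | ⟨ε, hε, hx, hy, hz⟩ | ⟨ε, hε, hx, hy, hz⟩
  · exact Or.inl ⟨by rw [hx, hy]; nlinarith, hz⟩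
  · have hε_sq : ε ^ 2 = 1 := by rcases hε with rfl | rfl <;> norm_num
    exact Or.inr (Or.inl ⟨by rw [hx, hy, mul_pow, hε_sq]; nlinarith, by linarith, hz.2⟩)
  · rcases hε with rfl | rfl
    · exact Or.inr (Or.inr ⟨by rw [hx, hy]; nlinarith, hz.1, by linarith⟩)
    · exact Or.inr (Or.inl ⟨by rw [hx, hy]; nlinarith, hz.1, by linarith⟩)

theorem subset_Nhor (r : ℝ) (S : Set R3) : S ⊆ Nhor r S := fun p hp =>
  ⟨p, hp, rfl, by simpa using sq_nonneg r⟩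

theorem Nhor_mono (r : ℝ) {S T : Set R3} (h : S ⊆ T) : Nhor r S ⊆ Nhor r T :=
  fun _ ⟨q, hq, hp⟩ => ⟨q, h hq, hp⟩

theorem Nhor_Pset_subset {r s : ℝ} (hr : 0 ≤ r) (hs : 0 ≤ s) : Nhor s (Pset r) ⊆ Pset (r + s) := by
  rintro p ⟨q, hq, hheight, hdist⟩
  have hpq : ‖p - q‖ ≤ s := by
    rw [← sq_le_sq₀ (norm_nonneg _) hs, EuclideanSpace.real_norm_sq_eq, Fin.sum_univ_three]
    simpa [hheight] using hdist
  have := add_mem_Pset hr hq (w := p - q) (by simp [hheight])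
  rw [add_sub_cancel] at this
  exact Pset_mono (by positivity) (by gcongr) this

theorem Nhor_Ggraph'_subset_Pset_one (n : ℕ) : Nhor (1 / (100 * n)) (Ggraph' n) ⊆ Pset 1 := by
  have hn : (n : ℝ)⁻¹ ≤ 1 := Nat.cast_inv_le_one n
  calc Nhor (1 / (100 * n)) (Ggraph' n) ⊆ Nhor (1 / (100 * n)) (Pset (1 / (5 * n))) :=
        Nhor_mono _ (Ggraph'_subset_Pset n)
    _ ⊆ Pset (1 / (5 * n) + 1 / (100 * n)) := Nhor_Pset_subset (by positivity) (by positivity)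
    _ ⊆ Pset 1 := Pset_mono (by positivity) ?_
  calc 1 / (5 * (n : ℝ)) + 1 / (100 * n) = 21 / 100 * (n : ℝ)⁻¹ := by ring
    _ ≤ 1 := by linarith

theorem bijOn_Pset {R : ℝ} (hR : 0 ≤ R) {f : R3 → R3} (hf : Bijective f)
    (hheight : ∀ p, f p 2 = p 2) (hfix : ∀ p, R ≤ ‖foldY p‖ → f p = p) :
    BijOn f (Pset R) (Pset R) := by
  have hmaps : MapsTo f {p | ‖foldY p‖ < R} {p | ‖foldY p‖ < R} :=
    mapsTo_of_injective_of_fixed_compl hf.injective fun p hp => hfix p (not_lt.1 hp)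
  have hpre : f ⁻¹' Pset R = Pset R := by
    ext p
    rcases lt_or_ge ‖foldY p‖ R with hp | hp
    · have hfp : ‖foldY (f p)‖ ≤ R := (hmaps hp).le
      have hfold : ‖foldY p‖ ≤ R := hp.le
      simp only [mem_preimage, mem_Pset_iff hR, hheight, hfp, hfold]
    · rw [mem_preimage, hfix p hp]
  simpa only [hpre] using hf.bijOn_preimage (t := Pset R)

theorem exists_biLipschitz_translation_Pset {r R : ℝ} {s : ℝ≥0} (hr : 0 ≤ r) (h : r + s < R) :
    ∃ C : ℝ≥0, 1 < C ∧ ∀ w : R3, w 2 = 0 → ‖w‖₊ ≤ s → ∃ f : R3 → R3, ContDiff ℝ ∞ f ∧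
      BijOn f (Pset R) (Pset R) ∧ LipschitzWith C f ∧ AntilipschitzWith C f ∧
      (∀ p, R ≤ ‖foldY p‖ → f p = p) ∧ ∀ p ∈ Pset r, f p = p + w := by
  set U : Set R3 := {p | ‖foldY p‖ < R}
  have hU : IsOpen U := isOpen_lt continuous_foldY.norm continuous_const
  have hrs : 0 ≤ r + s := by positivity
  obtain ⟨C, hC, hpush⟩ := exists_contDiff_biLipschitz_eq_add (isCompact_Pset hrs) hU
    (fun p hp => ((mem_Pset_iff hrs).1 hp).1.trans_lt h) s
  refine ⟨C, hC, fun w hw hws => ?_⟩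
  obtain ⟨f, hsmooth, hbij, hlip, hanti, hfix, hspan, htrans⟩ := hpush w hws
  have hheight (p : R3) : f p 2 = p 2 := by
    obtain ⟨t, ht⟩ := Submodule.mem_span_singleton.1 (hspan p)
    rw [← sub_eq_zero, ← PiLp.sub_apply, ← ht, PiLp.smul_apply, hw, smul_zero]
  have hfix' (p : R3) (hp : R ≤ ‖foldY p‖) : f p = p := hfix p hp.not_gt
  refine ⟨f, hsmooth, bijOn_Pset (hrs.trans h.le) hbij hheight hfix', hlip, hanti, hfix',
    fun p hp => htrans p ?_⟩
  rw [segment_eq_image']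
  rintro _ ⟨t, ⟨ht0, ht1⟩, rfl⟩
  have htw : ‖t • w‖ ≤ s := by
    rw [norm_smul, Real.norm_of_nonneg ht0]
    exact (mul_le_of_le_one_left (norm_nonneg w) ht1).trans hws
  simp only [add_sub_cancel_left]
  exact Pset_mono (by positivity) (by gcongr) (add_mem_Pset hr hp (by simp [hw]))

theorem image_eq_translateH {f : R3 → R3} {S : Set R3} {a b : ℝ}
    (hf : ∀ p ∈ S, f p = mk3 (p 0 + a) (p 1 + b) (p 2)) : f '' S = translateH a b S := by
  rw [image_congr hf]
  ext q
  refine exists_congr fun p => and_congr_right fun _ => ?_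
  simp [PiLp.ext_iff, Fin.forall_fin_succ, mk3, eq_comm]

theorem norm_mk3_zero_le {a b : ℝ} (ha : |a| ≤ 1) (hb : |b| ≤ 1) : ‖mk3 a b 0‖ ≤ 3 / 2 := by
  rw [← sq_le_sq₀ (norm_nonneg _) (by norm_num), EuclideanSpace.real_norm_sq_eq]
  have ha2 := (sq_le_one_iff_abs_le_one a).2 ha
  have hb2 := (sq_le_one_iff_abs_le_one b).2 hb
  simp only [Fin.sum_univ_three, mk3, WithLp.equiv_symm_apply, Matrix.cons_val]
  linarith

theorem exists_translation_biLipschitz_general :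
    ∃ C₂ : ℝ, 1 < C₂ ∧ ∀ a b : ℝ, |a| ≤ 1 → |b| ≤ 1 →
      ∃ f₂ : R3 → R3,
        ContDiff ℝ ∞ f₂ ∧
        BijOn f₂ (Pset 3) (Pset 3) ∧
        (∀ u ∈ Pset 3, ∀ v ∈ Pset 3, dist (f₂ u) (f₂ v) ≤ C₂ * dist u v) ∧
        (∀ u ∈ Pset 3, ∀ v ∈ Pset 3, dist u v ≤ C₂ * dist (f₂ u) (f₂ v)) ∧
        (∀ p ∈ verBoundary, f₂ p = p) ∧
        ∀ S ⊆ Pset 1, (∀ p ∈ S, f₂ p = mk3 (p 0 + a) (p 1 + b) (p 2)) ∧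
          f₂ '' S = translateH a b S := by
  obtain ⟨C, hC, h⟩ := exists_biLipschitz_translation_Pset (r := 1) (s := 3 / 2) (R := 3)
    zero_le_one (by norm_num)
  refine ⟨C, NNReal.one_lt_coe.2 hC, fun a b ha hb => ?_⟩
  obtain ⟨f, hsmooth, hbij, hlip, hanti, hfix, htrans⟩ := h (mk3 a b 0) rfl (norm_mk3_zero_le ha hb)
  have htrans' (p : R3) (hp : p ∈ Pset 1) : f p = mk3 (p 0 + a) (p 1 + b) (p 2) := by
    rw [htrans p hp]
    ext i
    fin_cases i <;> simp [mk3]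
  exact ⟨f, hsmooth, hbij, fun u _ v _ => hlip.dist_le_mul u v,
    fun u _ v _ => hanti.le_mul_dist u v,
    fun p hp => hfix p (le_norm_foldY_of_mem_verBoundary hp),
    fun S hS => ⟨fun p hp => htrans' p (hS hp), image_eq_translateH fun p hp => htrans' p (hS hp)⟩⟩

/-- Lemma `translation`.
Fix `C₁ > 1` and, for each positive integer `n`, let `f₁ = f₁(n)` be the time-1 map
constructed from the flow of the cut-off vector field (so `f₁(G) = G'` and
`N_n(G') := f₁(P(1/(100C₁n))) ⊆ N^hor_{1/(100n)}(G')`), and let `N_n(G'_{i,j})` be the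
horizontal translate of `N_n(G')` by `(i/n, j/n, 0)`.  Then there is a constant `C₂ > 1`
independent of `n` such that for all integers `i, j ∈ [-n, n]` there is a smooth
`C₂`-bi-Lipschitz homeomorphism `f_{2,i,j} : P(3) → P(3)` restricting to the identity on
`∂_ver P(3)`, mapping `G'` onto `G'_{i,j}` and `N_n(G')` onto `N_n(G'_{i,j})` (its
restriction to `N_n(G')` being the horizontal translation by `(i/n, j/n, 0)`). -/
theorem exists_translation_biLipschitz (C₁ : ℝ) (hC₁ : 1 < C₁)
    (f₁ : ℕ → R3 → R3)
    (hf₁G : ∀ n : ℕ, 0 < n → (f₁ n) '' Ggraph = Ggraph' n)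
    (hf₁N : ∀ n : ℕ, 0 < n →
      (f₁ n) '' (Pset (1 / (100 * C₁ * (n : ℝ)))) ⊆ Nhor (1 / (100 * (n : ℝ))) (Ggraph' n)) :
    ∃ C₂ : ℝ, 1 < C₂ ∧ ∀ n : ℕ, 0 < n → ∀ i j : ℤ, |i| ≤ (n : ℤ) → |j| ≤ (n : ℤ) →
      ∃ f₂ : R3 → R3,
        ContDiff ℝ (⊤ : ℕ∞) f₂ ∧
        Set.BijOn f₂ (Pset 3) (Pset 3) ∧
        (∀ u ∈ Pset 3, ∀ v ∈ Pset 3, dist (f₂ u) (f₂ v) ≤ C₂ * dist u v) ∧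
        (∀ u ∈ Pset 3, ∀ v ∈ Pset 3, dist u v ≤ C₂ * dist (f₂ u) (f₂ v)) ∧
        (∀ p ∈ verBoundary, f₂ p = p) ∧
        f₂ '' (Ggraph' n) = Gij n i j ∧
        (∀ p ∈ (f₁ n) '' (Pset (1 / (100 * C₁ * (n : ℝ)))),
          f₂ p = mk3 (p 0 + (i : ℝ) / (n : ℝ)) (p 1 + (j : ℝ) / (n : ℝ)) (p 2)) ∧
        f₂ '' ((f₁ n) '' (Pset (1 / (100 * C₁ * (n : ℝ))))) =
          translateH ((i : ℝ) / (n : ℝ)) ((j : ℝ) / (n : ℝ))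
            ((f₁ n) '' (Pset (1 / (100 * C₁ * (n : ℝ))))) := by
  obtain ⟨C₂, hC₂, h⟩ := exists_translation_biLipschitz_general
  refine ⟨C₂, hC₂, fun n hn i j hi hj => ?_⟩
  have hN := Nhor_Ggraph'_subset_Pset_one n
  obtain ⟨f₂, hsmooth, hbij, hlip, hanti, hfix, htrans⟩ :=
    h _ _ (abs_intCast_div_le_one hi) (abs_intCast_div_le_one hj)
  exact ⟨f₂, hsmooth, hbij, hlip, hanti, hfix, (htrans _ ((subset_Nhor _ _).trans hN)).2,
    htrans _ ((hf₁N n hn).trans hN)⟩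

end
end

section
/- For every constant a ≥ 1 there exists a constant C₃ > 1 such that for every positive integer n there exists a piecewise smooth homeomorphism f₃ : P(3) → P(3) satisfying: f₃(P(1/(100an))) = P(2); f₃(G) = G; (1) f₃ is a (C₃n)-Lipschitz map; (2) f₃⁻¹ is a C₃-Lipschitz map; (3) f₃ restricts to the identity on ∂_ver P(3). -/
/-!
At each height, `P(r)` consists of the points at distance at most `r` from the strands of `G` in
the horizontal plane. Stretch `P(3)` radially about `G` with a concave broken line `φ` that maps
`[0, c]` linearly onto `[0, d]` and `[c, 3]` linearly onto `[d, 3]`: a radial map is as Lipschitz as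
its profile up to a factor `3`, the slopes of `φ` are at most `d / c`, those of its inverse at most
`(3 - c) / (3 - d)`, and `φ 3 = 3` keeps the vertical boundary fixed.

Near the branch point the legs overlap, and a horizontal stretch of one leg would push points across
the plane `y = 0`. The height is therefore rescaled along the legs: with `w` the signed `y`-distance
to `G` and `t` the height above the bottom divided by the length that the leg has at this `w`, each
half of the solid has coordinates `(x + i w, t)`, and `(ζ, t) ↦ (φ |ζ| ζ / |ζ|, t)` respects the
wall between the halves because it preserves the sign of `w`.
-/

noncomputable section

open Set Filter Topology
open scoped NNReal

lemma abs_mul_sub_mul_le {A B a a' b b' : ℝ} (ha : |a| ≤ A) (hb : |b'| ≤ B) :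
    |a * b - a' * b'| ≤ A * |b - b'| + B * |a - a'| :=
  calc |a * b - a' * b'| = |a * (b - b') + b' * (a - a')| := by congr 1; ring
    _ ≤ |a| * |b - b'| + |b'| * |a - a'| := by
      simpa only [abs_mul] using abs_add_le (a * (b - b')) (b' * (a - a'))
    _ ≤ A * |b - b'| + B * |a - a'| := by gcongr

lemma abs_sign_mul_sub_sign_mul_le {K y y' Y Y' : ℝ} (hY : 0 ≤ Y) (hY' : 0 ≤ Y')
    (hYy : Y ≤ K * |y|) (hYy' : Y' ≤ K * |y'|) :
    |(SignType.sign y : ℝ) * Y - SignType.sign y' * Y'| ≤ max |Y - Y'| (K * |y - y'|) := by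
  have habs (x : SignType) : |(x : ℝ)| ≤ 1 := by cases x <;> simp
  by_cases hsign : SignType.sign y = SignType.sign y'
  · refine le_max_of_le_left ?_
    rw [hsign, ← mul_sub, abs_mul]
    exact mul_le_of_le_one_left (abs_nonneg _) (habs _)
  · have hopposite : y ≤ 0 ∧ 0 ≤ y' ∨ 0 ≤ y ∧ y' ≤ 0 := by grind [sign_neg, sign_pos]
    have hdist : |y| + |y'| = |y - y'| := by grind
    refine le_max_of_le_right ?_
    calc |(SignType.sign y : ℝ) * Y - SignType.sign y' * Y'|
        ≤ |(SignType.sign y : ℝ)| * Y + |(SignType.sign y' : ℝ)| * Y' := by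
          simpa only [abs_mul, abs_of_nonneg hY, abs_of_nonneg hY'] using
            abs_sub (SignType.sign y * Y : ℝ) (SignType.sign y' * Y')
      _ ≤ 1 * Y + 1 * Y' := by gcongr <;> exact habs _
      _ ≤ K * |y| + K * |y'| := by linarith
      _ = K * |y - y'| := by rw [← mul_add, hdist]

section MinMax

variable {E : Type*} [NormedAddCommGroup E] [NormedSpace ℝ E] {f g : E → ℝ} {x : E}

lemma differentiableAt_max_of_ne (hf : DifferentiableAt ℝ f x) (hg : DifferentiableAt ℝ g x)
    (hne : f x ≠ g x) : DifferentiableAt ℝ (fun y ↦ max (f y) (g y)) x := by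
  rcases hne.lt_or_gt with h | h
  · exact hg.congr_of_eventuallyEq ((hf.continuousAt.eventually_lt hg.continuousAt h).mono
      fun y hy ↦ max_eq_right hy.le)
  · exact hf.congr_of_eventuallyEq ((hg.continuousAt.eventually_lt hf.continuousAt h).mono
      fun y hy ↦ max_eq_left hy.le)

lemma differentiableAt_min_of_ne (hf : DifferentiableAt ℝ f x) (hg : DifferentiableAt ℝ g x)
    (hne : f x ≠ g x) : DifferentiableAt ℝ (fun y ↦ min (f y) (g y)) x := by
  rcases hne.lt_or_gt with h | h
  · exact hf.congr_of_eventuallyEq ((hf.continuousAt.eventually_lt hg.continuousAt h).mono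
      fun y hy ↦ min_eq_left hy.le)
  · exact hg.congr_of_eventuallyEq ((hg.continuousAt.eventually_lt hf.continuousAt h).mono
      fun y hy ↦ min_eq_right hy.le)

end MinMax

section Euclidean

variable {ι : Type*}

lemma euclideanSpace_dist_le_sum [Fintype ι] (u v : EuclideanSpace ℝ ι) :
    dist u v ≤ ∑ i, |u i - v i| := by
  rw [EuclideanSpace.dist_eq, Real.sqrt_le_left (Finset.sum_nonneg fun _ _ ↦ abs_nonneg _)]
  exact Finset.sum_sq_le_sq_sum_of_nonneg fun _ _ ↦ dist_nonneg

lemma interior_eq_empty_of_abs_coord_eq [Finite ι] [DecidableEq ι]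
    {S : Set (EuclideanSpace ℝ ι)} (i : ι) {c : EuclideanSpace ℝ ι → ℝ}
    (hc : ∀ p (t : ℝ), c (p + t • EuclideanSpace.single i 1) = c p)
    (hS : ∀ p ∈ S, |p i| = c p) : interior S = ∅ := by
  have := Fintype.ofFinite ι
  refine eq_empty_of_forall_notMem fun p hp ↦ ?_
  let line (t : ℝ) : EuclideanSpace ℝ ι := p + t • EuclideanSpace.single i 1
  have hline : Continuous line := by fun_prop
  have hnear : line ⁻¹' S ∈ 𝓝 0 :=
    hline.continuousAt.preimage_mem_nhds (by simpa [line] using mem_interior_iff_mem_nhds.1 hp)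
  refine infinite_of_mem_nhds 0 hnear ((toFinite {c p - p i, -c p - p i}).subset fun t ht ↦ ?_)
  have ht : |p i + t| = c p := by simpa [line, hc] using hS _ ht
  rcases eq_or_eq_neg_of_abs_eq ht with h | h
  · left; linarith
  · right; exact mem_singleton_iff.2 (by linarith)

end Euclidean

lemma lipschitzWith_affine {k : ℝ} (hk : 0 ≤ k) (c d : ℝ) :
    LipschitzWith k.toNNReal fun s ↦ k * (s - c) + d :=
  LipschitzWith.of_dist_le' fun s t ↦ le_of_eq <| by
    rw [Real.dist_eq, Real.dist_eq, ← abs_of_nonneg hk, ← abs_mul, abs_of_nonneg hk]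
    congr 1
    ring

lemma exists_orderIso_min_affine {k l : ℝ} (hl : 0 < l) (hlk : l < k) (c d : ℝ) :
    ∃ φ : ℝ ≃o ℝ, (∀ s ≤ c, φ s = k * (s - c) + d) ∧ (∀ s ≥ c, φ s = l * (s - c) + d) ∧
      LipschitzWith k.toNNReal φ ∧ LipschitzWith l⁻¹.toNNReal φ.symm ∧
      ∀ s ≠ c, DifferentiableAt ℝ φ s := by
  have hk : 0 < k := hl.trans hlk
  have hkl : k⁻¹ < l⁻¹ := inv_strictAnti₀ hl hlk
  let f (s : ℝ) : ℝ := min (k * (s - c) + d) (l * (s - c) + d)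
  let g (t : ℝ) : ℝ := max (k⁻¹ * (t - d) + c) (l⁻¹ * (t - d) + c)
  have hf_le (s) (hs : s ≤ c) : f s = k * (s - c) + d := min_eq_left (by nlinarith)
  have hf_ge (s) (hs : s ≥ c) : f s = l * (s - c) + d := min_eq_right (by nlinarith)
  have hmono : StrictMono f := fun s t hst ↦ min_lt_min (by gcongr) (by gcongr)
  have hright : Function.RightInverse g f := fun t ↦ by
    rcases le_total t d with ht | ht
    · have hg : g t = k⁻¹ * (t - d) + c := max_eq_left (by nlinarith)
      have hgc : g t ≤ c := by nlinarith [inv_pos.2 hk]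
      rw [hf_le _ hgc, hg]
      field_simp
      ring
    · have hg : g t = l⁻¹ * (t - d) + c := max_eq_right (by nlinarith)
      have hgc : g t ≥ c := by nlinarith [inv_pos.2 hl]
      rw [hf_ge _ hgc, hg]
      field_simp
      ring
  refine ⟨hmono.orderIsoOfRightInverse f g hright, hf_le, hf_ge, ?_, ?_, fun s hs ↦ ?_⟩
  · exact ((lipschitzWith_affine hk.le c d).min (lipschitzWith_affine hl.le c d)).weaken
      (max_le le_rfl (Real.toNNReal_mono hlk.le))
  · exact ((lipschitzWith_affine (inv_nonneg.2 hk.le) d c).max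
      (lipschitzWith_affine (inv_nonneg.2 hl.le) d c)).weaken
      (max_le (Real.toNNReal_mono hkl.le) le_rfl)
  · refine differentiableAt_min_of_ne (by fun_prop) (by fun_prop) fun h ↦ ?_
    exact hlk.ne' (mul_right_cancel₀ (sub_ne_zero.2 hs) (add_right_cancel h))

lemma exists_orderIso_piecewise_affine {c d e : ℝ} (hc : 0 < c) (hcd : c < d) (hde : d < e) :
    ∃ φ : ℝ ≃o ℝ, φ 0 = 0 ∧ φ c = d ∧ φ e = e ∧ LipschitzWith (d / c).toNNReal φ ∧
      LipschitzWith ((e - c) / (e - d)).toNNReal φ.symm ∧ ∀ s ≠ c, DifferentiableAt ℝ φ s := by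
  have hce : c < e := hcd.trans hde
  have hslope : (e - d) / (e - c) < d / c :=
    ((div_lt_one (by linarith)).2 (by linarith)).trans ((one_lt_div hc).2 hcd)
  obtain ⟨φ, hleft, hright, hφ, hφsymm, hdiff⟩ :=
    exists_orderIso_min_affine (div_pos (sub_pos.2 hde) (sub_pos.2 hce)) hslope c d
  refine ⟨φ, ?_, ?_, ?_, hφ, inv_div (e - d) (e - c) ▸ hφsymm, hdiff⟩
  · rw [hleft 0 hc.le, zero_sub, mul_neg, div_mul_cancel₀ d hc.ne', neg_add_cancel]
  · rw [hleft c le_rfl, sub_self, mul_zero, zero_add]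
  · rw [hright e hce.le, div_mul_cancel₀ _ (sub_pos.2 hce).ne', sub_add_cancel]

/-- The radial map `v ↦ φ(‖v‖) v / ‖v‖` of a normed space with profile `φ`, sending `0` to `0`. -/
def radialMap {E : Type*} [NormedAddCommGroup E] [NormedSpace ℝ E] (φ : ℝ → ℝ) (v : E) : E :=
  (φ ‖v‖ / ‖v‖) • v

section RadialMap

variable {E : Type*} [NormedAddCommGroup E] [NormedSpace ℝ E] {φ ψ : ℝ → ℝ} {v : E} {K : ℝ≥0}

lemma radialMap_eq_self (h : φ ‖v‖ = ‖v‖) : radialMap φ v = v := by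
  rcases eq_or_ne v 0 with rfl | hv
  · simp [radialMap]
  · rw [radialMap, h, div_self (norm_ne_zero_iff.2 hv), one_smul]

lemma norm_radialMap (h0 : φ 0 = 0) (hφ : 0 ≤ φ ‖v‖) : ‖radialMap φ v‖ = φ ‖v‖ := by
  rw [radialMap, norm_smul, norm_div, norm_norm, Real.norm_of_nonneg hφ]
  exact div_mul_cancel_of_imp fun hv ↦ by rw [hv, h0]

lemma radialMap_radialMap (hφ0 : φ 0 = 0) (hψ0 : ψ 0 = 0) (hφ : 0 ≤ φ ‖v‖) :
    radialMap ψ (radialMap φ v) = radialMap (ψ ∘ φ) v := by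
  rw [radialMap, norm_radialMap hφ0 hφ, radialMap, radialMap, smul_smul, Function.comp_apply]
  rcases eq_or_ne (φ ‖v‖) 0 with h | h
  · simp [h, hψ0]
  · rw [div_mul_div_cancel₀ h]

lemma abs_div_self_le_of_lipschitzWith (h0 : φ 0 = 0) (hφ : LipschitzWith K φ) (s : ℝ) :
    |φ s / s| ≤ K := by
  rw [abs_div]
  refine div_le_of_le_mul₀ (abs_nonneg s) K.coe_nonneg ?_
  simpa [Real.dist_eq, h0] using hφ.dist_le_mul s 0

lemma lipschitzWith_radialMap (h0 : φ 0 = 0) (hφ : LipschitzWith K φ) :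
    LipschitzWith (3 * K) (radialMap φ : E → E) := by
  refine LipschitzWith.of_dist_le_mul fun u v ↦ ?_
  set a := φ ‖u‖ / ‖u‖ with ha
  set b := φ ‖v‖ / ‖v‖ with hb
  have ha_mul : a * ‖u‖ = φ ‖u‖ := div_mul_cancel_of_imp fun hu ↦ by rw [hu, h0]
  have hb_mul : b * ‖v‖ = φ ‖v‖ := div_mul_cancel_of_imp fun hv ↦ by rw [hv, h0]
  have ha_le : |a| ≤ K := abs_div_self_le_of_lipschitzWith h0 hφ _
  have hnorm : |‖u‖ - ‖v‖| ≤ ‖u - v‖ := abs_norm_sub_norm_le u v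
  have hprofile : |φ ‖u‖ - φ ‖v‖| ≤ K * ‖u - v‖ :=
    (hφ.dist_le_mul _ _).trans (by gcongr; exact hnorm)
  have hfactor : |a - b| * ‖v‖ ≤ 2 * K * ‖u - v‖ :=
    calc |a - b| * ‖v‖ = |(φ ‖u‖ - φ ‖v‖) - a * (‖u‖ - ‖v‖)| := by
          rw [← abs_norm v, ← abs_mul, abs_norm, ← ha_mul, ← hb_mul]; congr 1; ring
      _ ≤ |φ ‖u‖ - φ ‖v‖| + |a| * |‖u‖ - ‖v‖| := (abs_sub _ _).trans_eq (by rw [abs_mul])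
      _ ≤ K * ‖u - v‖ + K * ‖u - v‖ := by gcongr
      _ = 2 * K * ‖u - v‖ := by ring
  calc dist (radialMap φ u) (radialMap φ v) = ‖a • (u - v) + (a - b) • v‖ := by
        rw [dist_eq_norm, radialMap, radialMap, ← ha, ← hb]; congr 1; module
    _ ≤ |a| * ‖u - v‖ + |a - b| * ‖v‖ := by
        simpa only [norm_smul, Real.norm_eq_abs] using norm_add_le (a • (u - v)) ((a - b) • v)
    _ ≤ K * ‖u - v‖ + 2 * K * ‖u - v‖ := by gcongr
    _ = (3 * K : ℝ≥0) * dist u v := by rw [dist_eq_norm]; push_cast; ring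

end RadialMap

lemma differentiableAt_radialMap {E : Type*} [NormedAddCommGroup E] [InnerProductSpace ℝ E]
    {φ : ℝ → ℝ} {v : E} (hv : v ≠ 0) (hφ : DifferentiableAt ℝ φ ‖v‖) :
    DifferentiableAt ℝ (radialMap φ) v := by
  have hnorm : DifferentiableAt ℝ (fun w : E ↦ ‖w‖) v := differentiableAt_id.norm ℝ hv
  have hprofile : DifferentiableAt ℝ (fun w : E ↦ φ ‖w‖) v := hφ.comp v hnorm
  have hscale : DifferentiableAt ℝ (fun w : E ↦ φ ‖w‖ / ‖w‖) v := by
    simpa only [div_eq_mul_inv] using hprofile.fun_mul (hnorm.fun_inv (norm_ne_zero_iff.2 hv))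
  exact hscale.fun_smul differentiableAt_id

lemma sign_im_radialMap {φ : ℝ → ℝ} (hφ : StrictMono φ) (h0 : φ 0 = 0) (ζ : ℂ) :
    SignType.sign (radialMap φ ζ).im = SignType.sign ζ.im := by
  rcases eq_or_ne ζ 0 with rfl | hζ
  · simp [radialMap]
  · have hnorm : 0 < ‖ζ‖ := norm_pos_iff.2 hζ
    have hscale : 0 < φ ‖ζ‖ / ‖ζ‖ := div_pos (h0 ▸ hφ hnorm) hnorm
    rw [radialMap, Complex.smul_im, smul_eq_mul, sign_mul, sign_pos hscale, one_mul]

lemma r3_ext {p q : R3} (h0 : p 0 = q 0) (h1 : p 1 = q 1) (h2 : p 2 = q 2) : p = q := by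
  ext i
  fin_cases i <;> assumption

section Mk3

variable (a b c : ℝ)

@[simp] lemma mk3_apply_zero : mk3 a b c 0 = a := by simp [mk3]

@[simp] lemma mk3_apply_one : mk3 a b c 1 = b := by simp [mk3]

@[simp] lemma mk3_apply_two : mk3 a b c 2 = c := by simp [mk3]

end Mk3

namespace Pset

/-- The distance in the `y`-direction from `p` to the strands of `G` at the height of `p`, counted
negatively between the two legs. -/
def offset (p : R3) : ℝ := |p 1| - max (-p 2) 0

/-- The position of `p` relative to `G` within its horizontal plane, so that `Pset r` is cut out by
`‖crossCoord p‖ ≤ r`. -/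
def crossCoord (p : R3) : ℂ := ⟨p 0, offset p⟩

/-- The difference in height of the ends of the segment, parallel to a leg of `G`, formed by the
points of that leg with offset `w`: for `w < 0` this segment ends below `z = 0`, where it meets the
plane of symmetry `y = 0` at height `w`. -/
def legHeight (w : ℝ) : ℝ := min w 0 + 8

/-- The height of `p` above the bottom of the solid in units of `legHeight`: along each leg, at any
offset, it runs from `0` to `1`. -/
def level (p : R3) : ℝ := (p 2 + 8) / legHeight (offset p)

/-- Coordinates on each half `0 ≤ y`, `y ≤ 0` of the solid. The level is used instead of the height
because the wall between the halves is then `{w ≤ 0, t = 1}` below `z = 0`, which radial maps in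
the first coordinate preserve. -/
def chart (p : R3) : ℂ × ℝ := (crossCoord p, level p)

/-- The image under `chart` of the slab `-8 ≤ z ≤ 8`, away from the offsets `≤ -8`. -/
def chartDomain : Set (ℂ × ℝ) :=
  {q | -8 < q.1.im ∧ q.2 ∈ Icc 0 2 ∧ (0 ≤ q.1.im ∨ q.2 ≤ 1)}

/-- The value of `|y|` at the point with a given chart. -/
def spread (q : ℂ × ℝ) : ℝ := max q.1.im 0 + max (1 - q.2) 0 * legHeight q.1.im

/-- The point on the side `ε` of the plane `y = 0` with a given chart. -/
def ofChart (ε : SignType) (q : ℂ × ℝ) : R3 :=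
  mk3 q.1.re (ε * spread q) (q.2 * legHeight q.1.im - 8)

section Chart

variable {p : R3} {q : ℂ × ℝ} {r w : ℝ}

lemma sq_norm_crossCoord (p : R3) : ‖crossCoord p‖ ^ 2 = p 0 ^ 2 + offset p ^ 2 := by
  rw [Complex.sq_norm, Complex.normSq_apply, crossCoord]
  ring

lemma offset_of_nonneg (hz : 0 ≤ p 2) : offset p = |p 1| := by
  rw [offset, max_eq_right (neg_nonpos.2 hz), sub_zero]

lemma offset_of_nonpos (hz : p 2 ≤ 0) : offset p = |p 1| + p 2 := by
  rw [offset, max_eq_left (neg_nonneg.2 hz), sub_neg_eq_add]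

lemma sq_offset_of_nonpos (hz : p 2 ≤ 0) :
    offset p ^ 2 = min ((p 1 + p 2) ^ 2) ((p 1 - p 2) ^ 2) := by
  rw [offset_of_nonpos hz]
  rcases le_total 0 (p 1) with hy | hy
  · rw [abs_of_nonneg hy, min_eq_left (by nlinarith)]
  · rw [abs_of_nonpos hy, min_eq_right (by nlinarith)]
    ring

lemma mem_iff_sq : p ∈ Pset r ↔ p 0 ^ 2 + offset p ^ 2 ≤ r ^ 2 ∧ p 2 ∈ Icc (-8) 8 := by
  have hbody (hz : 0 ≤ p 2) : offset p ^ 2 = p 1 ^ 2 := by rw [offset_of_nonneg hz, sq_abs]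
  have hlegs (hz : p 2 ≤ 0) : p 0 ^ 2 + offset p ^ 2 ≤ r ^ 2 ↔
      p 0 ^ 2 + (p 1 + p 2) ^ 2 ≤ r ^ 2 ∨ p 0 ^ 2 + (p 1 - p 2) ^ 2 ≤ r ^ 2 := by
    rw [sq_offset_of_nonpos hz, ← min_add_add_left, min_le_iff]
  constructor
  · rintro (⟨h, hz, hz'⟩ | ⟨h, hz, hz'⟩ | ⟨h, hz, hz'⟩)
    · exact ⟨(hbody hz).symm ▸ h, by linarith, hz'⟩
    · exact ⟨(hlegs hz').2 (.inl h), hz, by linarith⟩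
    · exact ⟨(hlegs hz').2 (.inr h), hz, by linarith⟩
  · rintro ⟨h, hz, hz'⟩
    rcases le_total 0 (p 2) with h0 | h0
    · exact .inl ⟨hbody h0 ▸ h, h0, hz'⟩
    · exact .inr (((hlegs h0).1 h).imp (⟨·, hz, h0⟩) (⟨·, hz, h0⟩))

lemma mem_iff (hr : 0 ≤ r) : p ∈ Pset r ↔ ‖crossCoord p‖ ≤ r ∧ p 2 ∈ Icc (-8) 8 := by
  rw [mem_iff_sq, ← sq_norm_crossCoord, sq_le_sq₀ (norm_nonneg _) hr]

lemma zero_eq_ggraph : Pset 0 = Ggraph := by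
  have hsum (a b : ℝ) : a ^ 2 + b ^ 2 ≤ 0 ^ 2 ↔ a = 0 ∧ b = 0 := by
    refine ⟨fun h ↦ ⟨?_, ?_⟩, by rintro ⟨rfl, rfl⟩; norm_num⟩ <;>
      nlinarith [sq_nonneg a, sq_nonneg b]
  ext p
  simp only [Pset, Ggraph, mem_ofPred_eq, hsum, or_and_right, exists_or, exists_eq_left, one_mul,
    neg_one_mul, add_eq_zero_iff_eq_neg, sub_eq_zero, and_assoc]
  tauto

lemma legHeight_of_nonneg (hw : 0 ≤ w) : legHeight w = 8 := by
  rw [legHeight, min_eq_right hw, zero_add]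

lemma legHeight_of_nonpos (hw : w ≤ 0) : legHeight w = w + 8 := by
  rw [legHeight, min_eq_left hw]

lemma legHeight_le (w : ℝ) : legHeight w ≤ 8 := by
  linarith [min_le_right w 0, legHeight.eq_1 w]

lemma legHeight_pos (hw : -8 < w) : 0 < legHeight w := by
  linarith [lt_min hw (by norm_num : (-8 : ℝ) < 0), legHeight.eq_1 w]

lemma spread_nonneg (hq : -8 < q.1.im) : 0 ≤ spread q :=
  add_nonneg (le_max_right _ _)
    (mul_nonneg (le_max_right _ _) (legHeight_pos hq).le)

lemma level_mul_legHeight (hp : -8 < offset p) : level p * legHeight (offset p) = p 2 + 8 :=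
  div_mul_cancel₀ _ (legHeight_pos hp).ne'

lemma le_offset_of_offset_neg (hp : offset p < 0) : p 2 ≤ offset p := by
  have hz : p 2 < 0 := by
    by_contra! hz
    exact hp.not_ge (offset_of_nonneg hz ▸ abs_nonneg _)
  linarith [offset_of_nonpos hz.le, abs_nonneg (p 1)]

lemma level_le_one_iff (hp : -8 < offset p) : level p ≤ 1 ↔ p 2 ≤ min (offset p) 0 := by
  rw [level, div_le_one (legHeight_pos hp), legHeight, add_le_add_iff_right]

lemma chart_mem_chartDomain (hp : -8 < offset p) (hz : p 2 ∈ Icc (-8) 8) :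
    chart p ∈ chartDomain := by
  have hheight := legHeight_pos hp
  have hside : 0 ≤ offset p ∨ level p ≤ 1 := by
    refine or_iff_not_imp_left.2 fun hw ↦ ?_
    rw [level_le_one_iff hp, min_eq_left (not_le.1 hw).le]
    exact le_offset_of_offset_neg (not_le.1 hw)
  refine ⟨hp, ⟨div_nonneg (by linarith [hz.1]) hheight.le, ?_⟩, hside⟩
  rcases hside with hw | ht
  · exact div_le_of_le_mul₀ hheight.le zero_le_two (by linarith [legHeight_of_nonneg hw, hz.2])
  · exact ht.trans one_le_two

lemma spread_chart (hp : -8 < offset p) : spread (chart p) = |p 1| := by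
  have hlevel := level_mul_legHeight hp
  have hheight := legHeight_pos hp
  change max (offset p) 0 + max (1 - level p) 0 * legHeight (offset p) = |p 1|
  rw [max_mul_of_nonneg _ _ hheight.le, zero_mul, sub_mul, one_mul, hlevel]
  rcases le_or_gt 0 (offset p) with hw | hw
  · rw [max_eq_left hw, legHeight_of_nonneg hw, offset]
    ring_nf
  · have hz := le_offset_of_offset_neg hw
    rw [max_eq_right hw.le, legHeight_of_nonpos hw.le, max_eq_left (by linarith)]
    linarith [offset_of_nonpos (hz.trans hw.le)]

lemma ofChart_chart (hp : -8 < offset p) : ofChart (SignType.sign (p 1)) (chart p) = p := by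
  refine r3_ext ?_ ?_ ?_
  · rw [ofChart, mk3_apply_zero]
    rfl
  · rw [ofChart, mk3_apply_one, spread_chart hp, sign_mul_abs]
  · rw [ofChart, mk3_apply_two]
    exact sub_eq_of_eq_add (level_mul_legHeight hp)

lemma ofChart_two_mem_Icc (ε : SignType) (hq : q ∈ chartDomain) :
    ofChart ε q 2 ∈ Icc (-8) 8 := by
  obtain ⟨hw, ⟨ht, ht'⟩, -⟩ := hq
  have hheight := legHeight_pos hw
  have hle := legHeight_le q.1.im
  rw [ofChart, mk3_apply_two]
  constructor <;> nlinarith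

lemma offset_ofChart {ε : SignType} (hq : q ∈ chartDomain) (hε : |ε * spread q| = spread q) :
    offset (ofChart ε q) = q.1.im := by
  obtain ⟨hw, ⟨ht, -⟩, hside⟩ := hq
  rw [offset, ofChart, mk3_apply_one, mk3_apply_two, hε, spread]
  rcases le_or_gt 0 q.1.im with hw0 | hw0
  · rw [legHeight_of_nonneg hw0, max_eq_left hw0, max_mul_of_nonneg _ _ (by norm_num)]
    ring_nf
  · have ht1 : q.2 ≤ 1 := hside.resolve_left hw0.not_ge
    rw [legHeight_of_nonpos hw0.le, max_eq_right hw0.le, max_eq_left (sub_nonneg.2 ht1),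
      max_eq_left (by nlinarith [mul_nonneg ht (neg_lt_iff_pos_add.1 hw).le])]
    ring

lemma chart_ofChart {ε : SignType} (hq : q ∈ chartDomain) (hε : |ε * spread q| = spread q) :
    chart (ofChart ε q) = q := by
  have hoffset := offset_ofChart hq hε
  refine Prod.ext (Complex.ext ?_ hoffset) ?_
  · change ofChart ε q 0 = q.1.re
    rw [ofChart, mk3_apply_zero]
  · change (ofChart ε q 2 + 8) / legHeight (offset (ofChart ε q)) = q.2
    rw [hoffset, ofChart, mk3_apply_two, sub_add_cancel,
      mul_div_cancel_right₀ _ (legHeight_pos hq.1).ne']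

lemma spread_pos_iff (hq : -8 < q.1.im) : 0 < spread q ↔ 0 < q.1.im ∨ q.2 < 1 := by
  have hheight := legHeight_pos hq
  constructor
  · contrapose!
    rintro ⟨hw, ht⟩
    rw [spread, max_eq_right hw, max_eq_right (sub_nonpos.2 ht), zero_mul, zero_add]
  · rintro (hw | ht)
    · exact add_pos_of_pos_of_nonneg (lt_max_of_lt_left hw) (by positivity)
    · exact add_pos_of_nonneg_of_pos (le_max_right _ _)
        (mul_pos (lt_max_of_lt_left (sub_pos.2 ht)) hheight)

end Chart

/-- The map of the solid given by `radialMap φ` on the cross sections of constant level, in the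
coordinates `chart` on each of the two sides of the plane `y = 0`. -/
def radialStretch (φ : ℝ → ℝ) (p : R3) : R3 :=
  ofChart (SignType.sign (p 1)) (Prod.map (radialMap φ) id (chart p))

section RadialStretch

variable {p : R3} {r : ℝ} {φ : ℝ → ℝ}

lemma neg_lt_im {ζ : ℂ} (hζ : ‖ζ‖ < r) : -r < ζ.im :=
  neg_lt_of_abs_lt ((Complex.abs_im_le_norm ζ).trans_lt hζ)

lemma neg_lt_offset (hr : 0 ≤ r) (hr8 : r < 8) (hp : p ∈ Pset r) : -8 < offset p :=
  neg_lt_im (((mem_iff hr).1 hp).1.trans_lt hr8)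

lemma norm_radialMap_le (hφ : StrictMono φ) (h0 : φ 0 = 0) {ζ : ℂ} (hζ : ‖ζ‖ ≤ r) :
    ‖radialMap φ ζ‖ ≤ φ r := by
  rw [norm_radialMap h0 (h0 ▸ hφ.monotone (norm_nonneg ζ))]
  exact hφ.monotone hζ

lemma map_radialMap_mem_chartDomain (hφ : StrictMono φ) (h0 : φ 0 = 0) {q : ℂ × ℝ}
    (hq : q ∈ chartDomain) (hlt : ‖radialMap φ q.1‖ < 8) :
    Prod.map (radialMap φ) id q ∈ chartDomain := by
  refine ⟨neg_lt_im hlt, hq.2.1, ?_⟩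
  rw [Prod.map_fst, ← sign_nonneg_iff, sign_im_radialMap hφ h0, sign_nonneg_iff]
  exact hq.2.2

lemma spread_map_radialMap_pos_iff (hφ : StrictMono φ) (h0 : φ 0 = 0) {q : ℂ × ℝ}
    (hq : -8 < q.1.im) (hlt : ‖radialMap φ q.1‖ < 8) :
    0 < spread (Prod.map (radialMap φ) id q) ↔ 0 < spread q := by
  have hw : -8 < (Prod.map (radialMap φ) id q).1.im := neg_lt_im hlt
  rw [spread_pos_iff hq, spread_pos_iff hw, Prod.map_fst, ← sign_eq_one_iff,
    sign_im_radialMap hφ h0, sign_eq_one_iff, Prod.map_snd, id]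

variable (hφ : StrictMono φ) (h0 : φ 0 = 0) (hr : 0 ≤ r) (hr8 : r < 8) (hφr : φ r < 8)
  (hp : p ∈ Pset r)
include hφ h0 hr hr8 hφr hp

lemma map_radialMap_chart_mem_chartDomain :
    Prod.map (radialMap φ) id (chart p) ∈ chartDomain := by
  obtain ⟨hnorm, hz⟩ := (mem_iff hr).1 hp
  exact map_radialMap_mem_chartDomain hφ h0 (chart_mem_chartDomain (neg_lt_offset hr hr8 hp) hz)
    ((norm_radialMap_le hφ h0 hnorm).trans_lt hφr)

lemma sign_spread_map_radialMap_chart :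
    SignType.sign (spread (Prod.map (radialMap φ) id (chart p))) = SignType.sign |p 1| := by
  have hw := neg_lt_offset hr hr8 hp
  have hlt : ‖radialMap φ (chart p).1‖ < 8 :=
    (norm_radialMap_le hφ h0 ((mem_iff hr).1 hp).1).trans_lt hφr
  have hnonneg := spread_nonneg (q := Prod.map (radialMap φ) id (chart p)) (neg_lt_im hlt)
  have hpos := spread_map_radialMap_pos_iff hφ h0 (q := chart p) hw hlt
  rw [spread_chart hw] at hpos
  grind [sign_pos, sign_zero, abs_nonneg]

lemma sign_radialStretch : SignType.sign (radialStretch φ p 1) = SignType.sign (p 1) := by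
  rw [radialStretch, ofChart, mk3_apply_one, sign_mul,
    sign_spread_map_radialMap_chart hφ h0 hr hr8 hφr hp, ← sign_mul, sign_mul_abs]

lemma chart_radialStretch : chart (radialStretch φ p) = Prod.map (radialMap φ) id (chart p) := by
  have hmem := map_radialMap_chart_mem_chartDomain hφ h0 hr hr8 hφr hp
  have hsign := sign_spread_map_radialMap_chart hφ h0 hr hr8 hφr hp
  refine chart_ofChart hmem ?_
  rw [abs_mul, abs_of_nonneg (spread_nonneg hmem.1)]
  rcases eq_or_ne (p 1) 0 with hy | hy
  · rw [hy, abs_zero, sign_zero, sign_eq_zero_iff] at hsign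
    rw [hsign, mul_zero]
  · rcases hy.lt_or_gt with hy | hy <;> simp [hy]

lemma radialStretch_mem : radialStretch φ p ∈ Pset (φ r) := by
  have hmem := map_radialMap_chart_mem_chartDomain hφ h0 hr hr8 hφr hp
  refine (mem_iff (h0 ▸ hφ.monotone hr)).2 ⟨?_, ofChart_two_mem_Icc _ hmem⟩
  have hcross : crossCoord (radialStretch φ p) = radialMap φ (crossCoord p) :=
    congrArg Prod.fst (chart_radialStretch hφ h0 hr hr8 hφr hp)
  exact hcross ▸ norm_radialMap_le hφ h0 ((mem_iff hr).1 hp).1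

end RadialStretch

lemma radialStretch_eq_self {φ : ℝ → ℝ} {p : R3} (hp : -8 < offset p)
    (hφ : φ ‖crossCoord p‖ = ‖crossCoord p‖) : radialStretch φ p = p := by
  have hchart : Prod.map (radialMap φ) id (chart p) = chart p := by
    rw [chart, Prod.map_apply, radialMap_eq_self hφ, id]
  rw [radialStretch, hchart, ofChart_chart hp]

section BijOn

variable {φ : ℝ ≃o ℝ} {r : ℝ} (h0 : φ 0 = 0) (hr : 0 ≤ r) (hr8 : r < 8) (hφr : φ r < 8)
include h0 hr hr8 hφr

lemma leftInvOn_radialStretch : LeftInvOn (radialStretch φ.symm) (radialStretch φ) (Pset r) := by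
  intro p hp
  have h0' : φ.symm 0 = 0 := φ.symm_apply_eq.2 h0.symm
  have hradial (ζ : ℂ) : radialMap φ.symm (radialMap φ ζ) = ζ := by
    rw [radialMap_radialMap h0 h0' (h0 ▸ φ.monotone (norm_nonneg ζ))]
    exact radialMap_eq_self (φ.symm_apply_apply _)
  have hchart : Prod.map (radialMap φ.symm) id (Prod.map (radialMap φ) id (chart p)) = chart p :=
    Prod.ext (hradial _) rfl
  rw [radialStretch, chart_radialStretch φ.strictMono h0 hr hr8 hφr hp,
    sign_radialStretch φ.strictMono h0 hr hr8 hφr hp, hchart,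
    ofChart_chart (neg_lt_offset hr hr8 hp)]

lemma bijOn_radialStretch : BijOn (radialStretch φ) (Pset r) (Pset (φ r)) := by
  have h0' : φ.symm 0 = 0 := φ.symm_apply_eq.2 h0.symm
  have hφr0 : 0 ≤ φ r := h0 ▸ φ.monotone hr
  have hsymm : φ.symm (φ r) = r := φ.symm_apply_apply r
  have hsymm8 : φ.symm (φ r) < 8 := hsymm.trans_lt hr8
  have hright : RightInvOn (radialStretch φ.symm) (radialStretch φ) (Pset (φ r)) := by
    simpa only [OrderIso.symm_symm] using leftInvOn_radialStretch h0' hφr0 hφr hsymm8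
  refine InvOn.bijOn ⟨leftInvOn_radialStretch h0 hr hr8 hφr, hright⟩
    (fun p hp ↦ radialStretch_mem φ.strictMono h0 hr hr8 hφr hp) fun p hp ↦ ?_
  simpa only [hsymm] using radialStretch_mem φ.symm.strictMono h0' hφr0 hφr hsymm8 hp

end BijOn

section Lipschitz

lemma lipschitzWith_offset : LipschitzWith 2 offset := by
  refine LipschitzWith.of_dist_le_mul fun p q ↦ ?_
  have hy : |(|p 1| - |q 1|)| ≤ dist p q :=
    (abs_abs_sub_abs_le _ _).trans (PiLp.dist_apply_le p q 1)
  have hz : |max (-p 2) 0 - max (-q 2) 0| ≤ dist p q :=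
    calc |max (-p 2) 0 - max (-q 2) 0| ≤ |-p 2 - -q 2| := by
          simpa using abs_max_sub_max_le_max (-p 2) 0 (-q 2) 0
      _ = |p 2 - q 2| := by rw [neg_sub_neg, abs_sub_comm]
      _ ≤ dist p q := PiLp.dist_apply_le p q 2
  calc dist (offset p) (offset q)
      = |(|p 1| - |q 1|) - (max (-p 2) 0 - max (-q 2) 0)| := by
        rw [Real.dist_eq, offset, offset, sub_sub_sub_comm]
    _ ≤ dist p q + dist p q := (abs_sub _ _).trans (add_le_add hy hz)
    _ = (2 : ℝ≥0) * dist p q := by push_cast; ring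

lemma lipschitzWith_crossCoord : LipschitzWith 3 crossCoord := by
  refine LipschitzWith.of_dist_le_mul fun p q ↦ ?_
  have hx : |p 0 - q 0| ≤ dist p q := PiLp.dist_apply_le p q 0
  have hoffset : |offset p - offset q| ≤ 2 * dist p q := lipschitzWith_offset.dist_le_mul p q
  calc dist (crossCoord p) (crossCoord q) ≤ |p 0 - q 0| + |offset p - offset q| := by
        rw [dist_eq_norm]
        exact Complex.norm_le_abs_re_add_abs_im (crossCoord p - crossCoord q)
    _ ≤ dist p q + 2 * dist p q := add_le_add hx hoffset
    _ = (3 : ℝ≥0) * dist p q := by push_cast; ring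

lemma lipschitzWith_legHeight : LipschitzWith 1 legHeight :=
  LipschitzWith.of_dist_le_mul fun v w ↦ by
    simpa [legHeight, Real.dist_eq] using abs_min_sub_min_le_max v 0 w 0

lemma five_le_legHeight {p : R3} (hp : p ∈ Pset 3) : 5 ≤ legHeight (offset p) := by
  have hw : -3 ≤ offset p := neg_le_of_abs_le
    ((Complex.abs_im_le_norm (crossCoord p)).trans ((mem_iff zero_le_three).1 hp).1)
  linarith [le_min hw (by norm_num : (-3 : ℝ) ≤ 0), legHeight.eq_1 (offset p)]

lemma chart_mem_chartDomain_of_mem_three {p : R3} (hp : p ∈ Pset 3) : chart p ∈ chartDomain :=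
  chart_mem_chartDomain (neg_lt_offset zero_le_three (by norm_num) hp)
    ((mem_iff zero_le_three).1 hp).2

lemma lipschitzOnWith_level : LipschitzOnWith 1 level (Pset 3) := by
  refine LipschitzOnWith.of_dist_le_mul fun p hp q hq ↦ ?_
  have hp8 : -8 < offset p := (chart_mem_chartDomain_of_mem_three hp).1
  obtain ⟨hq8, ⟨hq0, hq2⟩, -⟩ := chart_mem_chartDomain_of_mem_three hq
  have hz : |p 2 - q 2| ≤ dist p q := PiLp.dist_apply_le p q 2
  have hheight : |legHeight (offset p) - legHeight (offset q)| ≤ 2 * dist p q := by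
    simpa [Real.dist_eq] using (lipschitzWith_legHeight.comp lipschitzWith_offset).dist_le_mul p q
  have hscaled : legHeight (offset p) * |level p - level q| ≤ 5 * dist p q :=
    calc legHeight (offset p) * |level p - level q|
        = |(p 2 - q 2) - level q * (legHeight (offset p) - legHeight (offset q))| := by
          rw [← abs_of_pos (legHeight_pos hp8), ← abs_mul, abs_of_pos (legHeight_pos hp8)]
          congr 1
          linear_combination level_mul_legHeight hp8 - level_mul_legHeight hq8
      _ ≤ |p 2 - q 2| + |level q| * |legHeight (offset p) - legHeight (offset q)| :=
          (abs_sub _ _).trans_eq (by rw [abs_mul])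
      _ ≤ dist p q + 2 * (2 * dist p q) := by
          gcongr
          exact (abs_of_nonneg hq0).trans_le hq2
      _ = 5 * dist p q := by ring
  rw [Real.dist_eq, NNReal.coe_one, one_mul]
  nlinarith [five_le_legHeight hp, abs_nonneg (level p - level q)]

lemma abs_legHeight_le {w : ℝ} (hw : -8 < w) : |legHeight w| ≤ 8 :=
  (abs_of_pos (legHeight_pos hw)).trans_le (legHeight_le w)

lemma abs_im_sub_im_le_dist (q q' : ℂ × ℝ) : |q.1.im - q'.1.im| ≤ dist q q' :=
  (Complex.abs_im_le_norm (q.1 - q'.1)).trans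
    ((dist_eq_norm q.1 q'.1).symm.trans_le (le_max_left _ _))

lemma abs_legHeight_im_sub_le_dist (q q' : ℂ × ℝ) :
    |legHeight q.1.im - legHeight q'.1.im| ≤ dist q q' :=
  (lipschitzWith_legHeight.dist_le_mul _ _).trans
    ((one_mul _).trans_le (abs_im_sub_im_le_dist q q'))

lemma lipschitzOnWith_spread : LipschitzOnWith 10 spread chartDomain := by
  refine LipschitzOnWith.of_dist_le_mul fun q hq q' hq' ↦ ?_
  obtain ⟨-, ⟨hq0, -⟩, -⟩ := hq
  have hwidth : |max q.1.im 0 - max q'.1.im 0| ≤ dist q q' :=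
    (by simpa using abs_max_sub_max_le_max q.1.im 0 q'.1.im 0 :
      _ ≤ |q.1.im - q'.1.im|).trans (abs_im_sub_im_le_dist q q')
  have hdepth : |max (1 - q.2) 0 - max (1 - q'.2) 0| ≤ dist q q' :=
    calc |max (1 - q.2) 0 - max (1 - q'.2) 0| ≤ |(1 - q.2) - (1 - q'.2)| := by
          simpa using abs_max_sub_max_le_max (1 - q.2) 0 (1 - q'.2) 0
      _ = dist q.2 q'.2 := by rw [sub_sub_sub_cancel_left, Real.dist_eq, abs_sub_comm]
      _ ≤ dist q q' := le_max_right _ _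
  have hdepth_le : |max (1 - q.2) 0| ≤ 1 := by
    rw [abs_of_nonneg (le_max_right _ _)]
    exact max_le (by linarith) zero_le_one
  calc dist (spread q) (spread q')
      = |(max q.1.im 0 - max q'.1.im 0) + (max (1 - q.2) 0 * legHeight q.1.im -
          max (1 - q'.2) 0 * legHeight q'.1.im)| := by
        rw [Real.dist_eq, spread, spread, add_sub_add_comm]
    _ ≤ dist q q' + (1 * dist q q' + 8 * dist q q') :=
        (abs_add_le _ _).trans <| add_le_add hwidth <|
          (abs_mul_sub_mul_le hdepth_le (abs_legHeight_le hq'.1)).trans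
            (by gcongr; exact abs_legHeight_im_sub_le_dist q q')
    _ = (10 : ℝ≥0) * dist q q' := by push_cast; ring

lemma lipschitzOnWith_level_mul_legHeight :
    LipschitzOnWith 10 (fun q : ℂ × ℝ ↦ q.2 * legHeight q.1.im) chartDomain := by
  refine LipschitzOnWith.of_dist_le_mul fun q hq q' hq' ↦ ?_
  obtain ⟨-, ⟨hq0, hq2⟩, -⟩ := hq
  have hlevel : |q.2 - q'.2| ≤ dist q q' := le_max_right _ _
  calc |q.2 * legHeight q.1.im - q'.2 * legHeight q'.1.im|
      ≤ 2 * |legHeight q.1.im - legHeight q'.1.im| + 8 * |q.2 - q'.2| :=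
        abs_mul_sub_mul_le ((abs_of_nonneg hq0).trans_le hq2) (abs_legHeight_le hq'.1)
    _ ≤ 2 * dist q q' + 8 * dist q q' := by
        gcongr
        exact abs_legHeight_im_sub_le_dist q q'
    _ = (10 : ℝ≥0) * dist q q' := by push_cast; ring

variable {φ : ℝ → ℝ} {K : ℝ≥0}

lemma spread_map_radialMap_le (h0 : φ 0 = 0) (hmono : Monotone φ) (hφ : LipschitzWith K φ)
    (hK : 1 ≤ K) {q : ℂ × ℝ} (hq : 4 ≤ legHeight q.1.im) :
    spread (Prod.map (radialMap φ) id q) ≤ 2 * K * spread q := by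
  have hK' : (1 : ℝ) ≤ K := mod_cast hK
  set s := φ ‖q.1‖ / ‖q.1‖
  have hs0 : 0 ≤ s := div_nonneg (h0 ▸ hmono (norm_nonneg q.1)) (norm_nonneg q.1)
  have hsK : s ≤ K := le_of_abs_le (abs_div_self_le_of_lipschitzWith h0 hφ _)
  have him : (radialMap φ q.1).im = s * q.1.im := by
    rw [radialMap, Complex.smul_im, smul_eq_mul]
  have hwidth : max (s * q.1.im) 0 ≤ 2 * K * max q.1.im 0 := by
    rw [← mul_zero s, ← mul_max_of_nonneg _ _ hs0, mul_zero]
    gcongr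
    linarith
  have hheight : legHeight (s * q.1.im) ≤ 2 * K * legHeight q.1.im := by
    calc legHeight (s * q.1.im) ≤ 2 * 1 * 4 := (legHeight_le _).trans_eq (by norm_num)
      _ ≤ 2 * K * legHeight q.1.im := by gcongr
  calc spread (Prod.map (radialMap φ) id q)
      = max (s * q.1.im) 0 + max (1 - q.2) 0 * legHeight (s * q.1.im) := by
        rw [spread, Prod.map_fst, him, Prod.map_snd, id]
    _ ≤ 2 * K * max q.1.im 0 + max (1 - q.2) 0 * (2 * K * legHeight q.1.im) := by gcongr
    _ = 2 * K * spread q := by rw [spread]; ring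

lemma lipschitzOnWith_map_radialMap_chart (h0 : φ 0 = 0) (hφ : LipschitzWith K φ) (hK : 1 ≤ K) :
    LipschitzOnWith (9 * K) (fun p ↦ Prod.map (radialMap φ) id (chart p)) (Pset 3) := by
  have hcross : LipschitzWith (3 * K * 3) fun p ↦ radialMap φ (crossCoord p) :=
    (lipschitzWith_radialMap h0 hφ).comp lipschitzWith_crossCoord
  refine (hcross.lipschitzOnWith.prodMk lipschitzOnWith_level).weaken (max_le ?_ ?_)
  · exact le_of_eq (by ring)
  · exact one_le_mul (by norm_num) hK

lemma lipschitzOnWith_radialStretch (hmono : StrictMono φ) (h0 : φ 0 = 0) (h3 : φ 3 = 3)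
    (hφ : LipschitzWith K φ) : LipschitzOnWith (189 * K) (radialStretch φ) (Pset 3) := by
  have hK : 1 ≤ K := by simpa [h3] using abs_div_self_le_of_lipschitzWith h0 hφ 3
  have hmem {p : R3} (hp : p ∈ Pset 3) : Prod.map (radialMap φ) id (chart p) ∈ chartDomain :=
    map_radialMap_chart_mem_chartDomain hmono h0 zero_le_three (by norm_num) (by linarith) hp
  have hspread_le {p : R3} (hp : p ∈ Pset 3) :
      spread (Prod.map (radialMap φ) id (chart p)) ≤ 2 * K * |p 1| := by
    rw [← spread_chart (chart_mem_chartDomain_of_mem_three hp).1]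
    exact spread_map_radialMap_le h0 hmono.monotone hφ hK
      (by linarith [five_le_legHeight hp] : 4 ≤ legHeight (offset p))
  refine LipschitzOnWith.of_dist_le_mul fun p hp p' hp' ↦ ?_
  have hdist := (lipschitzOnWith_map_radialMap_chart h0 hφ hK).dist_le_mul p hp p' hp'
  set q := Prod.map (radialMap φ) id (chart p) with hq
  set q' := Prod.map (radialMap φ) id (chart p') with hq'
  have hx : |q.1.re - q'.1.re| ≤ dist q q' :=
    (Complex.abs_re_le_norm (q.1 - q'.1)).trans
      ((dist_eq_norm q.1 q'.1).symm.trans_le (le_max_left _ _))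
  have hy : |SignType.sign (p 1) * spread q - SignType.sign (p' 1) * spread q'| ≤
      max (10 * dist q q') (2 * K * dist p p') :=
    (abs_sign_mul_sub_sign_mul_le (spread_nonneg (hmem hp).1) (spread_nonneg (hmem hp').1)
      (hspread_le hp) (hspread_le hp')).trans <|
      max_le_max (lipschitzOnWith_spread.dist_le_mul q (hmem hp) q' (hmem hp'))
        (by gcongr; exact PiLp.dist_apply_le p p' 1)
  have hz : |q.2 * legHeight q.1.im - q'.2 * legHeight q'.1.im| ≤ 10 * dist q q' :=
    lipschitzOnWith_level_mul_legHeight.dist_le_mul q (hmem hp) q' (hmem hp')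
  push_cast at hdist ⊢
  calc dist (radialStretch φ p) (radialStretch φ p')
      ≤ |q.1.re - q'.1.re| + |SignType.sign (p 1) * spread q - SignType.sign (p' 1) * spread q'| +
          |q.2 * legHeight q.1.im - q'.2 * legHeight q'.1.im| := by
        refine (euclideanSpace_dist_le_sum _ _).trans_eq ?_
        simp [Fin.sum_univ_three, radialStretch, ofChart, ← hq, ← hq']
    _ ≤ 9 * K * dist p p' + 90 * K * dist p p' + 90 * K * dist p p' := by
        have hKD : 0 ≤ K * dist p p' := by positivity
        have hmax : max (10 * dist q q') (2 * K * dist p p') ≤ 90 * K * dist p p' :=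
          max_le (by linarith) (by linarith)
        linarith
    _ = 189 * K * dist p p' := by ring

lemma dist_le_mul_dist_radialStretch {φ : ℝ ≃o ℝ} (h0 : φ 0 = 0) (h3 : φ 3 = 3)
    (hφ : LipschitzWith K φ.symm) {u v : R3} (hu : u ∈ Pset 3) (hv : v ∈ Pset 3) :
    dist u v ≤ 189 * K * dist (radialStretch φ u) (radialStretch φ v) := by
  have h38 : (3 : ℝ) < 8 := by norm_num
  have hφ3 : φ 3 < 8 := h3.trans_lt h38
  have hmem {p : R3} (hp : p ∈ Pset 3) : radialStretch φ p ∈ Pset 3 := by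
    simpa only [h3] using radialStretch_mem φ.strictMono h0 zero_le_three h38 hφ3 hp
  have hinv : LeftInvOn (radialStretch φ.symm) (radialStretch φ) (Pset 3) :=
    leftInvOn_radialStretch h0 zero_le_three h38 hφ3
  have hlip := (lipschitzOnWith_radialStretch φ.symm.strictMono (φ.symm_apply_eq.2 h0.symm)
    (φ.symm_apply_eq.2 h3.symm) hφ).dist_le_mul _ (hmem hu) _ (hmem hv)
  simpa [hinv hu, hinv hv] using hlip

end Lipschitz

section VerticalBoundary

variable {p : R3} {r : ℝ}

lemma isClosed_of_nonneg (hr : 0 ≤ r) : IsClosed (Pset r) := by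
  have hPset : Pset r = {p | ‖crossCoord p‖ ≤ r} ∩ {p | p 2 ∈ Icc (-8) 8} := by
    ext p
    exact mem_iff hr
  rw [hPset]
  exact (isClosed_le lipschitzWith_crossCoord.continuous.norm continuous_const).inter
    (isClosed_Icc.preimage (by fun_prop))

lemma mem_interior_of_norm_crossCoord_lt (hp : ‖crossCoord p‖ < r) (hz : p 2 ∈ Ioo (-8) 8) :
    p ∈ interior (Pset r) := by
  have hopen : IsOpen ({p | ‖crossCoord p‖ < r} ∩ {p | p 2 ∈ Ioo (-8) 8}) :=
    (isOpen_lt lipschitzWith_crossCoord.continuous.norm continuous_const).inter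
      (isOpen_Ioo.preimage (by fun_prop))
  refine mem_interior.2 ⟨_, fun q hq ↦ ?_, hopen, hp, hz⟩
  exact (mem_iff ((norm_nonneg _).trans hp.le)).2 ⟨hq.1.le, Ioo_subset_Icc_self hq.2⟩

lemma mem_horizontal_disks (hp : p 0 ^ 2 + offset p ^ 2 < 9) (hz : p 2 = -8 ∨ p 2 = 8) :
    p ∈ D1int ∪ D2int ∪ D3int := by
  rcases hz with hz | hz
  · rw [sq_offset_of_nonpos (by linarith), hz, ← min_add_add_left, min_lt_iff] at hp
    rcases hp with hp | hp
    · exact .inl (.inr ⟨hz, hp⟩)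
    · exact .inr ⟨hz, by simpa using hp⟩
  · rw [offset_of_nonneg (by linarith), sq_abs] at hp
    exact .inl (.inl ⟨hz, hp⟩)

lemma norm_crossCoord_of_mem_verBoundary (hp : p ∈ verBoundary) : ‖crossCoord p‖ = 3 := by
  obtain ⟨hfrontier, hdisks⟩ := hp
  rw [(isClosed_of_nonneg zero_le_three).frontier_eq] at hfrontier
  obtain ⟨hle, hz⟩ := (mem_iff zero_le_three).1 hfrontier.1
  refine hle.antisymm (not_lt.1 fun hlt ↦ ?_)
  have hsq : p 0 ^ 2 + offset p ^ 2 < 9 := by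
    nlinarith [sq_norm_crossCoord p, norm_nonneg (crossCoord p)]
  rcases hz.1.eq_or_lt with hbot | hbot
  · exact hdisks (mem_horizontal_disks hsq (.inl hbot.symm))
  rcases hz.2.eq_or_lt with htop | htop
  · exact hdisks (mem_horizontal_disks hsq (.inr htop))
  · exact hfrontier.2 (mem_interior_of_norm_crossCoord_lt hlt ⟨hbot, htop⟩)

lemma radialStretch_eq_self_of_mem_verBoundary {φ : ℝ → ℝ} (h3 : φ 3 = 3) (hp : p ∈ verBoundary) :
    radialStretch φ p = p := by
  have hnorm := norm_crossCoord_of_mem_verBoundary hp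
  exact radialStretch_eq_self (neg_lt_im (hnorm.trans_lt (by norm_num))) (by rw [hnorm, h3])

end VerticalBoundary

section Smoothness

/-- A set off which `radialStretch φ` is smooth if `φ` is smooth off `c`: the creases of `chart` and
of `ofChart`, together with the tube of radius `c` around the core of the solid. -/
def singularSet (c : ℝ) : Set R3 :=
  {p | p 1 = 0} ∪ {p | p 2 = 0} ∪ {p | offset p = 0} ∪ {p | ‖crossCoord p‖ = c}

lemma isClosed_offset_eq_zero : IsClosed {p | offset p = 0} :=
  isClosed_eq lipschitzWith_offset.continuous continuous_const

lemma isClosed_coord_eq_zero (i : Fin 3) : IsClosed {p : R3 | p i = 0} :=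
  isClosed_eq (by fun_prop) continuous_const

lemma isClosed_creases : IsClosed ({p : R3 | p 1 = 0} ∪ {p | p 2 = 0} ∪ {p | offset p = 0}) :=
  ((isClosed_coord_eq_zero 1).union (isClosed_coord_eq_zero 2)).union isClosed_offset_eq_zero

lemma isClosed_singularSet (c : ℝ) : IsClosed (singularSet c) :=
  isClosed_creases.union (isClosed_eq lipschitzWith_crossCoord.continuous.norm continuous_const)

lemma interior_singularSet (c : ℝ) : interior (singularSet c) = ∅ := by
  have hcoord (i : Fin 3) : interior {p : R3 | p i = 0} = ∅ :=
    interior_eq_empty_of_abs_coord_eq i (c := fun _ ↦ 0) (fun _ _ ↦ rfl) fun p hp ↦ by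
      rw [hp, abs_zero]
  have hoffset : interior {p | offset p = 0} = ∅ :=
    interior_eq_empty_of_abs_coord_eq 1 (c := fun p ↦ max (-p 2) 0) (by simp)
      fun p hp ↦ sub_eq_zero.1 hp
  have htube : interior {p | ‖crossCoord p‖ = c} = ∅ := by
    refine interior_eq_empty_of_abs_coord_eq 0 (c := fun p ↦ √(c ^ 2 - offset p ^ 2))
      (by simp [offset]) fun p hp ↦ ?_
    rw [← Real.sqrt_sq_eq_abs, ← hp, sq_norm_crossCoord, add_sub_cancel_right]
  rw [singularSet, interior_union_isClosed_of_interior_empty isClosed_creases htube,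
    interior_union_isClosed_of_interior_empty
      ((isClosed_coord_eq_zero 1).union (isClosed_coord_eq_zero 2)) hoffset,
    interior_union_isClosed_of_interior_empty (isClosed_coord_eq_zero 1) (hcoord 2), hcoord 1]

variable {p : R3}

lemma differentiableAt_offset (hy : p 1 ≠ 0) (hz : p 2 ≠ 0) : DifferentiableAt ℝ offset p := by
  have hcoord (i : Fin 3) : DifferentiableAt ℝ (fun p : R3 ↦ p i) p := by fun_prop
  exact ((hcoord 1).abs hy).fun_sub
    (differentiableAt_max_of_ne (hcoord 2).fun_neg (differentiableAt_const 0) (neg_ne_zero.2 hz))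

lemma differentiableAt_crossCoord (hy : p 1 ≠ 0) (hz : p 2 ≠ 0) :
    DifferentiableAt ℝ crossCoord p := by
  have hcoord : DifferentiableAt ℝ (fun p : R3 ↦ p 0) p := by fun_prop
  exact Complex.equivRealProdCLM.symm.differentiableAt.comp p
    (hcoord.prodMk (differentiableAt_offset hy hz))

lemma differentiableAt_legHeight {w : ℝ} (hw : w ≠ 0) : DifferentiableAt ℝ legHeight w :=
  (differentiableAt_min_of_ne differentiableAt_id (differentiableAt_const 0) hw).add_const 8

lemma differentiableAt_level (hy : p 1 ≠ 0) (hz : p 2 ≠ 0) (hw : offset p ≠ 0)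
    (hp : -8 < offset p) : DifferentiableAt ℝ level p := by
  have hheight : DifferentiableAt ℝ (fun p ↦ legHeight (offset p)) p :=
    (differentiableAt_legHeight hw).comp p (differentiableAt_offset hy hz)
  have hcoord : DifferentiableAt ℝ (fun p : R3 ↦ p 2 + 8) p := by fun_prop
  exact (hcoord.fun_mul (hheight.fun_inv (legHeight_pos hp).ne')).congr_of_eventuallyEq
    (.of_forall fun p ↦ div_eq_mul_inv _ _)

lemma level_ne_one (hy : p 1 ≠ 0) (hz : p 2 ≠ 0) (hw : offset p ≠ 0) (hp : -8 < offset p) :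
    level p ≠ 1 := by
  intro hlevel
  have hz' : p 2 = min (offset p) 0 := by
    rw [level, div_eq_one_iff_eq (legHeight_pos hp).ne', legHeight] at hlevel
    exact add_right_cancel hlevel
  rcases hw.lt_or_gt with hw | hw
  · rw [min_eq_left hw.le] at hz'
    refine hy (abs_eq_zero.1 ?_)
    linarith [offset_of_nonpos (hz'.trans_lt hw).le]
  · exact hz (hz'.trans (min_eq_right hw.le))

lemma differentiableAt_im_fst (q : ℂ × ℝ) : DifferentiableAt ℝ (fun q : ℂ × ℝ ↦ q.1.im) q :=
  Complex.imCLM.differentiableAt.comp q differentiableAt_fst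

lemma differentiableAt_legHeight_im {q : ℂ × ℝ} (hw : q.1.im ≠ 0) :
    DifferentiableAt ℝ (fun q : ℂ × ℝ ↦ legHeight q.1.im) q :=
  DifferentiableAt.comp q (g := legHeight) (differentiableAt_legHeight hw)
    (differentiableAt_im_fst q)

lemma differentiableAt_spread {q : ℂ × ℝ} (hw : q.1.im ≠ 0) (ht : q.2 ≠ 1) :
    DifferentiableAt ℝ spread q := by
  have hlevel : DifferentiableAt ℝ (fun q : ℂ × ℝ ↦ 1 - q.2) q := by fun_prop
  have hwidth : DifferentiableAt ℝ (fun q : ℂ × ℝ ↦ max q.1.im 0) q :=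
    differentiableAt_max_of_ne (differentiableAt_im_fst q) (differentiableAt_const 0) hw
  have hdepth : DifferentiableAt ℝ (fun q : ℂ × ℝ ↦ max (1 - q.2) 0) q :=
    differentiableAt_max_of_ne hlevel (differentiableAt_const 0) (sub_ne_zero.2 ht.symm)
  exact hwidth.fun_add (hdepth.fun_mul (differentiableAt_legHeight_im hw))

lemma differentiableAt_ofChart (ε : SignType) {q : ℂ × ℝ} (hw : q.1.im ≠ 0) (ht : q.2 ≠ 1) :
    DifferentiableAt ℝ (ofChart ε) q := by
  have hre : DifferentiableAt ℝ (fun q : ℂ × ℝ ↦ q.1.re) q :=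
    Complex.reCLM.differentiableAt.comp q differentiableAt_fst
  have hspread := (differentiableAt_spread hw ht).const_mul (ε : ℝ)
  have hheight := (differentiableAt_snd.fun_mul (differentiableAt_legHeight_im hw)).sub_const 8
  rw [differentiableAt_euclidean]
  intro i
  fin_cases i
  · simpa [ofChart] using hre
  · simpa [ofChart] using hspread
  · simpa [ofChart] using hheight

lemma differentiableAt_radialStretch {φ : ℝ → ℝ} {c : ℝ} (hmono : StrictMono φ) (h0 : φ 0 = 0)
    (hφ : ∀ s ≠ c, DifferentiableAt ℝ φ s) (hp : -8 < offset p) (hc : p ∉ singularSet c) :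
    DifferentiableAt ℝ (radialStretch φ) p := by
  simp only [singularSet, mem_union, mem_ofPred_eq, not_or] at hc
  obtain ⟨⟨⟨hy, hz⟩, hw⟩, hnorm⟩ := hc
  have hcross_ne : crossCoord p ≠ 0 := fun h ↦ hw (congrArg Complex.im h)
  have him : (radialMap φ (crossCoord p)).im ≠ 0 := by
    rwa [← sign_ne_zero, sign_im_radialMap hmono h0, sign_ne_zero]
  have hradial : DifferentiableAt ℝ (fun p ↦ radialMap φ (crossCoord p)) p :=
    (differentiableAt_radialMap hcross_ne (hφ _ hnorm)).comp p (differentiableAt_crossCoord hy hz)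
  have hchart : DifferentiableAt ℝ (fun p ↦ Prod.map (radialMap φ) id (chart p)) p :=
    hradial.prodMk (differentiableAt_level hy hz hw hp)
  have hsign : ∀ᶠ q : R3 in 𝓝 p, SignType.sign (q 1) = SignType.sign (p 1) := by
    have hcont : ContinuousAt (fun q : R3 ↦ SignType.sign (q 1)) p :=
      (continuousAt_sign_of_ne_zero hy).comp (f := fun q : R3 ↦ q 1) (by fun_prop)
    simpa [ContinuousAt] using hcont
  exact ((differentiableAt_ofChart (SignType.sign (p 1)) him (level_ne_one hy hz hw hp)).comp p
    hchart).congr_of_eventuallyEq (hsign.mono fun q hq ↦ by rw [radialStretch, hq]; rfl)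

lemma differentiableOn_radialStretch {φ : ℝ → ℝ} {c r : ℝ} (hmono : StrictMono φ) (h0 : φ 0 = 0)
    (hφ : ∀ s ≠ c, DifferentiableAt ℝ φ s) (hr : 0 ≤ r) (hr8 : r < 8) :
    DifferentiableOn ℝ (radialStretch φ) (Pset r \ singularSet c) := fun _ hp ↦
  (differentiableAt_radialStretch hmono h0 hφ (neg_lt_offset hr hr8 hp.1)
    hp.2).differentiableWithinAt

end Smoothness

end Pset

open Pset in
theorem exists_radial_stretch_general {c d : ℝ} (hc : 0 < c) (hcd : c < d) (hd : d < 3) :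
    ∃ f : R3 → R3,
      BijOn f (Pset 3) (Pset 3) ∧
      f '' Pset c = Pset d ∧
      f '' Ggraph = Ggraph ∧
      (∃ Z : Set R3, IsClosed Z ∧ interior Z = ∅ ∧ DifferentiableOn ℝ f (Pset 3 \ Z)) ∧
      (∀ u ∈ Pset 3, ∀ v ∈ Pset 3, dist (f u) (f v) ≤ 189 * (d / c) * dist u v) ∧
      (∀ u ∈ Pset 3, ∀ v ∈ Pset 3, dist u v ≤ 189 * ((3 - c) / (3 - d)) * dist (f u) (f v)) ∧
      ∀ p ∈ verBoundary, f p = p := by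
  obtain ⟨φ, h0, hφc, h3, hφ, hφsymm, hdiff⟩ := exists_orderIso_piecewise_affine hc hcd hd
  have hbij {r : ℝ} (hr : 0 ≤ r) (hr3 : r ≤ 3) : BijOn (radialStretch φ) (Pset r) (Pset (φ r)) :=
    bijOn_radialStretch h0 hr (by linarith) (by linarith [φ.monotone hr3])
  refine ⟨radialStretch φ, ?_, ?_, ?_,
    ⟨singularSet c, isClosed_singularSet c, interior_singularSet c,
      differentiableOn_radialStretch φ.strictMono h0 hdiff zero_le_three (by norm_num)⟩,
    ?_, ?_, fun p ↦ radialStretch_eq_self_of_mem_verBoundary h3⟩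
  · simpa only [h3] using hbij zero_le_three le_rfl
  · simpa only [hφc] using (hbij hc.le (by linarith)).image_eq
  · simpa only [h0, zero_eq_ggraph] using (hbij le_rfl zero_le_three).image_eq
  · have hslope : 0 ≤ d / c := (div_pos (hc.trans hcd) hc).le
    simpa [Real.coe_toNNReal _ hslope] using
      (lipschitzOnWith_radialStretch φ.strictMono h0 h3 hφ).dist_le_mul
  · intro u hu v hv
    have hslope : 0 ≤ (3 - c) / (3 - d) := div_nonneg (by linarith) (by linarith)
    simpa only [Real.coe_toNNReal _ hslope] using
      dist_le_mul_dist_radialStretch h0 h3 hφsymm hu hv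

end

noncomputable section

/-- Lemma `dependonn`.
For every constant `a ≥ 1` there is a constant `C₃ > 1` such that for every positive
integer `n` there is a piecewise smooth homeomorphism
`f₃ : (P(3), P(1/(100an)), G) → (P(3), P(2), G)` with
(1) `f₃` a `(C₃·n)`-Lipschitz map, (2) `f₃⁻¹` a `C₃`-Lipschitz map, and
(3) `f₃ = id` on `∂_ver P(3)`. -/
theorem exists_radial_stretch (a : ℝ) (ha : 1 ≤ a) :
    ∃ C₃ : ℝ, 1 < C₃ ∧ ∀ n : ℕ, 0 < n →
      ∃ f₃ : R3 → R3,
        Set.BijOn f₃ (Pset 3) (Pset 3) ∧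
        f₃ '' (Pset (1 / (100 * a * (n : ℝ)))) = Pset 2 ∧
        f₃ '' Ggraph = Ggraph ∧
        -- `f₃` is piecewise smooth: differentiable away from a closed nowhere dense set
        (∃ Z : Set R3, IsClosed Z ∧ interior Z = ∅ ∧ DifferentiableOn ℝ f₃ (Pset 3 \ Z)) ∧
        (∀ u ∈ Pset 3, ∀ v ∈ Pset 3, dist (f₃ u) (f₃ v) ≤ (C₃ * (n : ℝ)) * dist u v) ∧
        (∀ u ∈ Pset 3, ∀ v ∈ Pset 3, dist u v ≤ C₃ * dist (f₃ u) (f₃ v)) ∧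
        (∀ p ∈ verBoundary, f₃ p = p) := by
  refine ⟨37800 * a, by linarith, fun n hn ↦ ?_⟩
  have han : 1 ≤ a * n := one_le_mul_of_one_le_of_one_le ha (mod_cast hn)
  have hδ0 : 0 < 1 / (100 * a * (n : ℝ)) := one_div_pos.2 (by linarith)
  have hδ2 : 1 / (100 * a * (n : ℝ)) < 2 := (div_lt_iff₀ (by linarith)).2 (by linarith)
  obtain ⟨f, hbij, himage, hgraph, hsmooth, hlip, hinv, hfix⟩ :=
    exists_radial_stretch_general hδ0 hδ2 (by norm_num)
  refine ⟨f, hbij, himage, hgraph, hsmooth, fun u hu v hv ↦ (hlip u hu v hv).trans_eq ?_,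
    fun u hu v hv ↦ (hinv u hu v hv).trans ?_, hfix⟩
  · rw [div_div_eq_mul_div]
    ring
  · exact mul_le_mul_of_nonneg_right (by linarith) dist_nonneg

end
end
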